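/- Let a, b, d be real numbers such that d and a+b+1 are not nonpositive integers, let x ∈ (0,1) be real, and let t be real with 0 < |t| < 1. Set z₁ = 1 − √((1+t)² − 4xt) and z₂ = 1 + √((1+t)² − 4xt), where √ denotes the principal branch of the complex square root. Then Σ_{n=0}^{∞} ((d+a)_n (b)_n)/((a+b+1)_n) · F(−n−a, n+b; d; x) · (−t)^n/n! = ((z₂−t)/(z₂+t))^{a+d} · (2/(z₂−t))^{b} · F(−a, b; d; (t+z₁)/(2t)) · F(a+d, a+1; a+b+1; 2t/(t+z₂)), where complex powers are taken with the principal branch and F denotes the Gauss hypergeometric function (analytically continued where the argument lies outside the unit disc but off [1,∞)). -/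

import Mathlib

noncomputable section

/-- Rising factorial (Pochhammer symbol) `(a)_n = a(a+1)⋯(a+n-1)`. -/
def poch (a : ℝ) (n : ℕ) : ℝ := ∏ i ∈ Finset.range n, (a + (i : ℝ))

/-- The Gauss hypergeometric series `F(a,b;c;x) = Σ_{k≥0} (a)_k (b)_k / ((c)_k k!) xᵏ`. -/
def hyp (a b c x : ℝ) : ℝ :=
  ∑' k : ℕ, poch a k * poch b k / (poch c k * (Nat.factorial k : ℝ)) * x ^ k

/-- The Gauss hypergeometric function for real arguments `z < 1`, extended by
(principal branch) analytic continuation to arguments `z ≤ -1` via the Pfaff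
transformation `F(a,b;c;z) = (1-z)^{-a} F(a, c-b; c; z/(z-1))`, whose right-hand
side converges for all `z < 0`. -/
def hypExt (a b c z : ℝ) : ℝ :=
  if z < 0 then (1 - z) ^ (-a) * hyp a (c - b) c (z / (z - 1)) else hyp a b c z

lemma poch_zero (a : ℝ) : poch a 0 = 1 := by simp [poch]

lemma poch_succ (a : ℝ) (n : ℕ) : poch a (n+1) = poch a n * (a + n) := by
  simp [poch, Finset.prod_range_succ]

lemma poch_add (a : ℝ) (n k : ℕ) : poch a (n+k) = poch a n * poch (a+n) k := by
  simp only [poch, Finset.prod_range_add]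
  congr 1
  apply Finset.prod_congr rfl
  intro i _
  push_cast; ring

lemma poch_succ' (a : ℝ) (n : ℕ) : poch a (n+1) = a * poch (a+1) n := by
  rw [add_comm n 1, poch_add]; simp [poch]

lemma poch_ne (c : ℝ) (hc : ∀ m : ℕ, c ≠ -(m:ℝ)) (n : ℕ) : poch c n ≠ 0 := by
  unfold poch
  rw [Finset.prod_ne_zero_iff]
  intro i _ h
  exact hc i (by linarith)

lemma shift_ne {c : ℝ} (hc : ∀ m : ℕ, c ≠ -(m:ℝ)) (n : ℕ) : ∀ m : ℕ, c + n ≠ -(m:ℝ) := by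
  intro m h
  exact hc (n+m) (by push_cast; linarith)

lemma chu (s : ℕ) : ∀ (A D : ℝ), (∀ m : ℕ, D ≠ -(m:ℝ)) →
    ∑ i ∈ Finset.range (s+1), (-1:ℝ)^i * (s.choose i) * poch A i / poch D i
      = poch (D - A) s / poch D s := by
  induction s with
  | zero => intro A D _; simp [poch]
  | succ s ih =>
    intro A D hD
    have hD1 : ∀ m : ℕ, D + 1 ≠ -(m:ℝ) := by simpa using shift_ne hD 1
    have h0 : D ≠ 0 := by simpa using hD 0
    have key : ∑ i ∈ Finset.range (s+1+1), (-1:ℝ)^i * ((s+1).choose i) * poch A i / poch D i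
       = (∑ i ∈ Finset.range (s+1), (-1:ℝ)^i * (s.choose i) * poch A i / poch D i)
        - A / D * (∑ i ∈ Finset.range (s+1), (-1:ℝ)^i * (s.choose i) * poch (A+1) i / poch (D+1) i) := by
      have e1 : ∑ i ∈ Finset.range (s+1), (-1:ℝ)^i * (s.choose i) * poch A i / poch D i
         = ∑ i ∈ Finset.range (s+1+1), (-1:ℝ)^i * (s.choose i) * poch A i / poch D i := by
        rw [Finset.sum_range_succ _ (s+1)]; simp
      rw [e1, Finset.sum_range_succ' _ (s+1), Finset.sum_range_succ' _ (s+1), Finset.mul_sum]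
      rw [add_sub_right_comm, ← Finset.sum_sub_distrib]
      congr 1
      · apply Finset.sum_congr rfl
        intro i _
        rw [poch_succ' A, poch_succ' D, Nat.choose_succ_succ]
        have := poch_ne _ hD1 i
        field_simp
        push_cast; ring
      · simp
    rw [key, ih A D hD, ih (A+1) (D+1) hD1]
    have e : D + 1 - (A + 1) = D - A := by ring
    rw [e, poch_succ (D-A) s]
    have h1 := poch_ne _ hD s
    have h2 := poch_ne _ hD1 s
    have h3 := poch_ne _ hD (s+1)
    have e2 : D * poch (D+1) s = poch D s * (D + s) := by rw [← poch_succ', poch_succ]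
    have h4 : D + s ≠ 0 := by
      intro h; exact hD s (by linarith)
    rw [poch_succ D s]
    have e3 : A / D * (poch (D - A) s / poch (D+1) s) = A * poch (D-A) s / (poch D s * (D+s)) := by
      rw [← e2]; field_simp
    rw [e3]
    field_simp
    ring

/-- summand for the Saalschütz sum -/
def sF (a b : ℝ) (N K s : ℕ) : ℝ :=
  (K.choose s : ℝ) * (N.descFactorial s : ℝ) * poch b (N+K-s) * poch ((s:ℝ) - N - a) (K-s)
    / poch (a+b+1) (N-s)

lemma sF_step (a b : ℝ) (hab : ∀ m : ℕ, a + b + 1 ≠ -(m : ℝ)) (N K s : ℕ) (hs : s + 1 ≤ K) :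
    sF a b N (K+1) (s+1) - ((K:ℝ)-a)*(K+b) * sF a b N K (s+1)
      = ((N:ℝ)-s)*(a+b+N-s) * sF a b N K s
        - ((N:ℝ)-(s+1:ℕ))*(a+b+N-(s+1:ℕ)) * sF a b N K (s+1) := by
  obtain ⟨k, rfl⟩ : ∃ k, K = s + 1 + k := ⟨K - (s+1), by omega⟩
  by_cases hN : N < s + 1
  · have h1 : N.descFactorial (s+1) = 0 := Nat.descFactorial_eq_zero_iff_lt.mpr hN
    have : ((N:ℝ)-s) * (N.descFactorial s : ℝ) = 0 := by
      rcases Nat.lt_or_ge N s with h | h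
      · rw [Nat.descFactorial_eq_zero_iff_lt.mpr h]; simp
      · have : N = s := by omega
        subst this; simp
    simp only [sF, h1]
    have e : ∀ p q r t : ℝ, ((N:ℝ)-s) * p * (q * (N.descFactorial s : ℝ) * r * t) 
        = (((N:ℝ)-s) * (N.descFactorial s : ℝ)) * (p*q*r*t) := by intros; ring
    simp only [← mul_div_assoc, e, this]
    simp
  · obtain ⟨n, rfl⟩ : ∃ n, N = s + 1 + n := ⟨N - (s+1), by omega⟩
    have i1 : s+1+n+(s+1+k+1)-(s+1) = (s+1+n+k)+1 := by omega
    have i2 : s+1+k+1-(s+1) = k+1 := by omega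
    have i3 : s+1+n-(s+1) = n := by omega
    have i4 : s+1+n+(s+1+k)-(s+1) = s+1+n+k := by omega
    have i5 : s+1+k-(s+1) = k := by omega
    have i6 : s+1+n+(s+1+k)-s = s+1+n+k+1 := by omega
    have i7 : s+1+k-s = k+1 := by omega
    have i8 : s+1+n-s = n+1 := by omega
    simp only [sF, i1, i2, i3, i4, i5, i6, i7, i8]
    have hc := poch_ne _ hab n
    have hc1 : a+b+1+(n:ℝ) ≠ 0 := fun h => hab n (by linarith)
    have d1 : ((s+1+n).descFactorial (s+1) : ℝ) = (n+1) * ((s+1+n).descFactorial s : ℝ) := by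
      rw [Nat.descFactorial_succ, i8]; push_cast; ring
    have c1 : ((s+1+k+1).choose (s+1) : ℝ) = (s+1+k).choose s + (s+1+k).choose (s+1) := by
      rw [Nat.choose_succ_succ]; push_cast; ring
    have c2 : ((s+1+k).choose (s+1) : ℝ) * (s+1) = (s+1+k).choose s * (k+1) := by
      have := Nat.choose_succ_right_eq (s+1+k) s
      rw [i7] at this
      exact_mod_cast this
    have p1 : poch ((s:ℝ) - (s+1+n:ℕ) - a) (k+1) = ((s:ℝ) - (s+1+n:ℕ) - a) * poch (((s+1:ℕ):ℝ) - (s+1+n:ℕ) - a) k := by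
      rw [poch_succ']; congr 2; push_cast; ring
    rw [d1, c1, p1, poch_succ b, poch_succ (a+b+1), poch_succ _ k]
    set P := poch (((s+1:ℕ):ℝ) - (s+1+n:ℕ) - a) k
    set Q := poch b (s+1+n+k)
    set R := poch (a+b+1) n
    set D := ((s+1+n).descFactorial s : ℝ)
    set C0 := ((s+1+k).choose s : ℝ)
    have hC : ((s+1+k).choose (s+1) : ℝ) = C0 * (k+1) / (s+1) := by
      rw [eq_div_iff (by positivity)]; exact c2
    rw [hC]
    have hs0 : (s:ℝ)+1 ≠ 0 := by positivity
    push_cast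
    field_simp
    ring

lemma saal (a b : ℝ) (hab : ∀ m : ℕ, a + b + 1 ≠ -(m : ℝ)) (N K : ℕ) :
    ∑ s ∈ Finset.range (K+1), sF a b N K s = poch (-a) K * poch b K * poch b N / poch (a+b+1) N := by
  induction K with
  | zero => simp [sF, poch_zero]
  | succ K ih =>
    set H : ℕ → ℝ := fun s => ((N:ℝ)-s)*(a+b+N-s) * sF a b N K s with hH
    have h0 : sF a b N (K+1) 0 = ((K:ℝ)-a)*(K+b) * sF a b N K 0 - H 0 := by
      have e : N + (K+1) = (N + K) + 1 := by ring
      simp only [hH, sF, Nat.choose_zero_right, Nat.descFactorial_zero, Nat.sub_zero, e, poch_succ]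
      have hc := poch_ne _ hab N
      field_simp
      push_cast
      ring
    have hlast : sF a b N (K+1) (K+1) = H K := by
      simp only [hH, sF]
      by_cases hN : N < K + 1
      · have h1 : N.descFactorial (K+1) = 0 := Nat.descFactorial_eq_zero_iff_lt.mpr hN
        have : ((N:ℝ)-K) * (N.descFactorial K : ℝ) = 0 := by
          rcases Nat.lt_or_ge N K with h | h
          · rw [Nat.descFactorial_eq_zero_iff_lt.mpr h]; simp
          · have : N = K := by omega
            subst this; simp
        have e : ∀ p q r t : ℝ, ((N:ℝ)-K) * p * (q * (N.descFactorial K : ℝ) * r * t) 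
            = (((N:ℝ)-K) * (N.descFactorial K : ℝ)) * (p*q*r*t) := by intros; ring
        rw [h1]
        simp only [← mul_div_assoc, e, this]
        simp
      · obtain ⟨n, rfl⟩ : ∃ n, N = K + 1 + n := ⟨N - (K+1), by omega⟩
        have i8 : K+1+n-K = n+1 := by omega
        have i3 : K+1+n-(K+1) = n := by omega
        have i4 : K+1+n+(K+1)-(K+1) = K+1+n := by omega
        have i5 : K+1+n+K-K = K+1+n := by omega
        rw [Nat.descFactorial_succ]
        simp only [i8, i3, i4, i5, Nat.sub_self, Nat.choose_self, poch_zero, poch_succ]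
        have hc := poch_ne _ hab n
        have hc1 : a+b+1+(n:ℝ) ≠ 0 := fun h => hab n (by linarith)
        field_simp
        push_cast
        ring
    rw [Finset.sum_range_succ, Finset.sum_range_succ', h0, hlast]
    have e1 : ∑ s ∈ Finset.range K, sF a b N (K+1) (s+1)
       = ∑ s ∈ Finset.range K, (((K:ℝ)-a)*(K+b) * sF a b N K (s+1) + (H s - H (s+1))) := by
      apply Finset.sum_congr rfl
      intro s hs
      have := sF_step a b hab N K s (by simpa using hs)
      simp only [hH]
      linarith
    rw [e1, Finset.sum_add_distrib, Finset.sum_range_sub', ← Finset.mul_sum]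
    rw [Finset.sum_range_succ'] at ih
    have : ((K:ℝ)-a)*(K+b) * (∑ s ∈ Finset.range K, sF a b N K (s+1)  + sF a b N K 0)
      = poch (-a) (K+1) * poch b (K+1) * poch b N / poch (a+b+1) N := by
      rw [ih, poch_succ, poch_succ]; ring
    linarith

/-- coefficient of the quadruple expansion -/
def W (a b d : ℝ) (n k m j : ℕ) : ℝ :=
  poch (a+d) n / (poch (a+b+1) n * n.factorial) * (poch (-(n:ℝ)-a) k / (poch d k * k.factorial))
    * (poch b (n+k+j) / j.factorial) * ((k.choose m : ℝ) * (-1)^m)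

lemma W_inner (a b d : ℝ) (hd : ∀ m : ℕ, d ≠ -(m : ℝ)) (hab : ∀ m : ℕ, a + b + 1 ≠ -(m : ℝ))
    (N K s : ℕ) (hN : s ≤ N) (hK : s ≤ K) :
    ∑ j ∈ Finset.range (s+1), W a b d (N-s) (K-j) (s-j) j
      = poch (a+d) N / (poch d K * N.factorial * K.factorial) * sF a b N K s := by
  obtain ⟨n, rfl⟩ : ∃ n, N = s + n := ⟨N - s, by omega⟩
  obtain ⟨k, rfl⟩ : ∃ k, K = s + k := ⟨K - s, by omega⟩
  rw [← Finset.sum_range_reflect]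
  have hc := poch_ne _ hab n
  have hdk := poch_ne _ hd k
  have e : ∀ i ∈ Finset.range (s+1), W a b d (s+n-s) (s+k-(s+1-1-i)) (s-(s+1-1-i)) (s+1-1-i)
     = (poch (a+d) n / (poch (a+b+1) n * n.factorial) * (poch (-(n:ℝ)-a) k / (poch d k * k.factorial)) * poch b (n+k+s) / s.factorial) * ((-1:ℝ)^i * (s.choose i) * poch (-(n:ℝ)-a+k) i / poch (d+k) i) := by
    intro i hi
    have hi : i ≤ s := by simpa [Nat.lt_succ_iff] using hi
    have i1 : s+n-s = n := by omega
    have i2 : s+k-(s+1-1-i) = k+i := by omega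
    have i3 : s-(s+1-1-i) = i := by omega
    have i4 : s+1-1-i = s-i := by omega
    have i5 : n+(k+i)+(s-i) = n+k+s := by omega
    rw [i1, i2, i3, i4]
    unfold W
    rw [i5, poch_add _ k i, poch_add d k i]
    have hdi := poch_ne _ (shift_ne hd k) i
    have c1 : ((k+i).choose i : ℝ) = (k+i).factorial / (k.factorial * i.factorial) := by
      rw [Nat.add_choose, Nat.cast_div (Nat.factorial_mul_factorial_dvd_factorial_add k i) (by positivity)]
      push_cast; rfl
    have c2 : (s.choose i : ℝ) = s.factorial / (i.factorial * (s-i).factorial) := Nat.cast_choose ℝ hi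
    rw [c1, c2]
    have f1 : ((k+i).factorial : ℝ) ≠ 0 := by positivity
    field_simp
  rw [Finset.sum_congr rfl e, ← Finset.mul_sum, chu s _ _ (shift_ne hd k)]
  have hds := poch_ne _ (shift_ne hd k) s
  have e1 : d + (k:ℝ) - (-(n:ℝ) - a + k) = a + d + n := by ring
  rw [e1]
  unfold sF
  have i1 : s+n-s = n := by omega
  have i2 : s+k-s = k := by omega
  have i3 : s+n+(s+k)-s = n+k+s := by omega
  rw [i1, i2, i3]
  have e2 : ((s:ℝ) - (s+n:ℕ) - a) = -(n:ℝ)-a := by push_cast; ring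
  rw [e2, add_comm s n, add_comm s k, poch_add (a+d), poch_add d]
  have c2 : ((k+s).choose s : ℝ) = (k+s).factorial / (k.factorial * s.factorial) := by
    rw [Nat.add_choose, Nat.cast_div (Nat.factorial_mul_factorial_dvd_factorial_add k s) (by positivity)]
    push_cast; rfl
  have c3 : ((n+s).descFactorial s : ℝ) = (n+s).factorial / n.factorial := by
    have := Nat.factorial_mul_descFactorial (n := n+s) (k := s) (by omega)
    rw [Nat.add_sub_cancel] at this
    rw [eq_div_iff (by positivity), mul_comm]
    exact_mod_cast this
  rw [c2, c3]
  have f1 : ((k+s).factorial : ℝ) ≠ 0 := by positivity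
  have f2 : ((n+s).factorial : ℝ) ≠ 0 := by positivity
  field_simp

lemma W_total (a b d : ℝ) (hd : ∀ m : ℕ, d ≠ -(m : ℝ)) (hab : ∀ m : ℕ, a + b + 1 ≠ -(m : ℝ))
    (N K : ℕ) :
    ∑ s ∈ Finset.range (K+1), ∑ j ∈ Finset.range (s+1),
       (if s ≤ N then W a b d (N-s) (K-j) (s-j) j else 0)
      = (poch (a+d) N * poch b N / (poch (a+b+1) N * N.factorial))
        * (poch (-a) K * poch b K / (poch d K * K.factorial)) := by
  have : ∀ s ∈ Finset.range (K+1), ∑ j ∈ Finset.range (s+1),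
       (if s ≤ N then W a b d (N-s) (K-j) (s-j) j else 0)
       = poch (a+d) N / (poch d K * N.factorial * K.factorial) * sF a b N K s := by
    intro s hs
    have hs : s ≤ K := by simpa [Nat.lt_succ_iff] using hs
    by_cases h : s ≤ N
    · simp only [h, if_true]
      exact W_inner a b d hd hab N K s h hs
    · simp only [h, if_false, Finset.sum_const_zero]
      rw [sF, Nat.descFactorial_eq_zero_iff_lt.mpr (by omega)]
      simp
  rw [Finset.sum_congr rfl this, ← Finset.mul_sum, saal a b hab]
  have hc := poch_ne _ hab N
  have hdk := poch_ne _ hd K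
  field_simp

open Filter Topology

lemma asc_eq_poch (a : ℝ) (n : ℕ) : (ascPochhammer ℝ n).eval a = poch a n := by
  induction n with
  | zero => simp [poch]
  | succ n ih => rw [ascPochhammer_succ_eval, ih, poch_succ]

lemma binom (a y : ℝ) (hy : |y| < 1) :
    HasSum (fun j : ℕ => poch a j / j.factorial * y^j) ((1-y)^(-a)) := by
  have h := (Real.one_div_one_sub_rpow_hasFPowerSeriesOnBall_zero a).hasSum (y := y) (by simpa [enorm_eq_nnnorm] using! hy)
  have h1 : 0 ≤ 1 - y := by linarith [(abs_lt.mp hy).2]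
  simp only [zero_add] at h
  rw [Real.rpow_neg h1, ← one_div]
  have e : (fun j : ℕ => poch a j / j.factorial * y^j) = fun n => (FormalMultilinearSeries.ofScalars ℝ (fun n : ℕ => Ring.choose (a + (n:ℝ) - 1) n) n) fun _ => y := by
   ext j
   rw [FormalMultilinearSeries.ofScalars_apply_eq, smul_eq_mul, ← Ring.multichoose_eq]
   congr 1
   have := Ring.factorial_nsmul_multichoose_eq_ascPochhammer a j
   rw [Polynomial.ascPochhammer_smeval_eq_eval] at this
   rw [div_eq_iff (by positivity), mul_comm]
   rw [nsmul_eq_mul] at this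
   rw [this, asc_eq_poch]
  rw [e]; exact h

lemma poch_nonneg {M : ℝ} (hM : 0 ≤ M) (k : ℕ) : 0 ≤ poch M k :=
  Finset.prod_nonneg (fun i _ => by positivity)

lemma abs_poch_le {x M : ℝ} (h : |x| ≤ M) (k : ℕ) : |poch x k| ≤ poch M k := by
  unfold poch
  rw [Finset.abs_prod]
  apply Finset.prod_le_prod
  · intro i _; positivity
  · intro i _
    calc |x + i| ≤ |x| + |(i:ℝ)| := abs_add_le _ _
      _ ≤ M + i := by rw [Nat.abs_cast]; linarith

lemma poch_bd {x M σ : ℝ} (h : |x| ≤ M) (h0 : 0 < σ) (h1 : σ < 1) (k : ℕ) :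
    |poch x k| ≤ k.factorial * (σ⁻¹)^k * (1-σ)^(-M) := by
  have hM : 0 ≤ M := (abs_nonneg x).trans h
  refine (abs_poch_le h k).trans ?_
  have hs := binom M σ (by rw [abs_of_pos h0]; exact h1)
  have := le_hasSum hs k (fun j _ => by have := poch_nonneg hM j; positivity)
  have hk : (0:ℝ) < k.factorial := by positivity
  calc poch M k = k.factorial * (σ⁻¹)^k * (poch M k / k.factorial * σ^k) := by rw [inv_pow]; field_simp
    _ ≤ _ := by gcongr

lemma poch_bd_nat {x M σ : ℝ} (n : ℕ) (h : |x| ≤ n + M) (h0 : 0 < σ) (h1 : σ < 1) (k : ℕ) :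
    |poch x k| ≤ k.factorial * (σ⁻¹)^k * (((1-σ)⁻¹)^n * (1-σ)^(-M)) := by
  refine (poch_bd h h0 h1 k).trans (le_of_eq ?_)
  have : 0 < 1 - σ := by linarith
  rw [neg_add, Real.rpow_add this, Real.rpow_neg this.le, Real.rpow_natCast, inv_pow (1-σ)]

lemma fact_bd {d σ : ℝ} (hd : ∀ m : ℕ, d ≠ -(m : ℝ)) (h0 : 0 < σ) (h1 : σ < 1) :
    ∃ C > 0, ∀ k : ℕ, k.factorial / |poch d k| ≤ C * (σ⁻¹)^k := by
  have hne : ∀ k : ℕ, (k.factorial:ℝ) / |poch d k| * σ^k ≠ 0 := by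
    intro k
    have := abs_pos.mpr (poch_ne d hd k)
    positivity
  have hs : Summable (fun k : ℕ => (k.factorial:ℝ) / |poch d k| * σ^k) := by
    apply summable_of_ratio_test_tendsto_lt_one h1 (Eventually.of_forall hne)
    have e : (fun n : ℕ => ‖((n+1).factorial:ℝ) / |poch d (n+1)| * σ^(n+1)‖ / ‖(n.factorial:ℝ) / |poch d n| * σ^n‖) = fun n : ℕ => |((n:ℝ)+1)/(n+d)| * σ := by
      ext n
      have hp := abs_pos.mpr (poch_ne d hd n)
      have hp' : 0 < |(n:ℝ)+d| := abs_pos.mpr (fun h => hd n (by linarith))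
      have hf : (0:ℝ) < n.factorial := by positivity
      rw [← norm_div, Real.norm_eq_abs, poch_succ, Nat.factorial_succ, pow_succ, abs_mul, add_comm d, abs_div ((n:ℝ)+1), abs_of_pos (show (0:ℝ) < n+1 by positivity)]
      rw [abs_of_pos (by positivity)]
      push_cast
      field_simp
    rw [e]
    have : Tendsto (fun n : ℕ => ((n:ℝ)+1)/(n+d)) atTop (𝓝 1) := by
      have := tendsto_add_mul_div_add_mul_atTop_nhds (1:ℝ) d 1 (d := 1) one_ne_zero
      simpa [add_comm] using this
    have := (this.abs).mul_const σ
    simpa using this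
  obtain ⟨C, hC⟩ := hs.tendsto_atTop_zero.bddAbove_range
  refine ⟨C, ?_, ?_⟩
  · have := hC (Set.mem_range_self 0)
    simp [poch_zero] at this; linarith
  · intro k
    have := hC (Set.mem_range_self k)
    rw [inv_pow, ← div_eq_mul_inv, le_div_iff₀ (by positivity)]
    exact this

lemma choose_bd {τ : ℝ} (h0 : 0 < τ) (k m : ℕ) : (k.choose m : ℝ) ≤ (1+τ)^k * (τ⁻¹)^m := by
  rw [inv_pow, ← div_eq_mul_inv, le_div_iff₀ (by positivity)]
  by_cases h : m ≤ k
  · rw [add_comm 1 τ, add_pow]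
    have := Finset.single_le_sum (f := fun m => τ^m * 1^(k-m) * (k.choose m : ℝ)) (s := Finset.range (k+1)) (fun i _ => by positivity) (Finset.mem_range.mpr (by omega : m < k+1))
    refine le_trans (le_of_eq ?_) this
    simp; ring
  · rw [Nat.choose_eq_zero_of_lt (by omega)]; simp; positivity

lemma W_bd (a b d : ℝ) (hd : ∀ m : ℕ, d ≠ -(m : ℝ)) (hab : ∀ m : ℕ, a + b + 1 ≠ -(m : ℝ))
    {τ : ℝ} (h0 : 0 < τ) (h1 : τ < 1) :
    ∃ C P : ℝ, 0 < C ∧ 0 < P ∧ ∀ n k m j, |W a b d n k m j| ≤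
      C * P^n * (((1-τ)⁻¹)^4*(1+τ))^k * (τ⁻¹)^m * (τ⁻¹)^j := by
  set q := 1 - τ with hq
  have q0 : 0 < q := by linarith
  have q1 : q < 1 := by linarith
  have hq' : 1 - q = τ := by simp [hq]
  obtain ⟨C1, hC1, H1⟩ := fact_bd hab q0 q1
  obtain ⟨C2, hC2, H2⟩ := fact_bd hd q0 q1
  refine ⟨τ^(-|a+d|) * C1 * τ^(-|b|) * τ^(-|a|) * C2 * τ^(-|b|) * q^(-|b|), (q⁻¹)^4*(τ⁻¹)^2, by positivity, by positivity, ?_⟩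
  intro n k m j
  have hb : |b| ≤ |b| := le_rfl
  have B1 := poch_bd (x := a+d) le_rfl q0 q1 n
  have B2 := H1 n
  have B3 := poch_bd (x := b) le_rfl q0 q1 n
  have B4 := poch_bd_nat (x := -(n:ℝ)-a) (M := |a|) n (by
    have := abs_sub (-(n:ℝ)) a
    rw [abs_neg, Nat.abs_cast] at this; exact this) q0 q1 k
  have B5 := H2 k
  have B6 := poch_bd_nat (x := b+n) (M := |b|) n (by
    have := abs_add_le b n
    rw [abs_of_nonneg (Nat.cast_nonneg n : (0:ℝ) ≤ n)] at this; linarith) q0 q1 k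
  have B7 := poch_bd_nat (x := b+(n+k:ℕ)) (M := |b|) (n+k) (by
    have := abs_add_le b (n+k:ℕ)
    rw [abs_of_nonneg (Nat.cast_nonneg (n+k) : (0:ℝ) ≤ (n+k:ℕ))] at this; linarith) h0 h1 j
  have B8 := choose_bd h0 k m
  rw [hq'] at B1 B3 B4 B6
  rw [← hq] at B7
  have e : |W a b d n k m j| = |poch (a+d) n| * (n.factorial / |poch (a+b+1) n|) * |poch b n| *
     |poch (-(n:ℝ)-a) k| * (k.factorial / |poch d k|) * |poch (b+n) k| * |poch (b+(n+k:ℕ)) j| * (k.choose m : ℝ) / ((n.factorial:ℝ)^2 * (k.factorial:ℝ)^2 * j.factorial) := by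
    unfold W
    rw [poch_add b (n+k) j, poch_add b n k]
    simp only [abs_mul, abs_div, abs_pow, abs_neg, abs_one, one_pow, mul_one, Nat.abs_cast]
    have p1 := abs_pos.mpr (poch_ne _ hab n)
    have p2 := abs_pos.mpr (poch_ne _ hd k)
    have f1 : (0:ℝ) < n.factorial := by positivity
    have f2 : (0:ℝ) < k.factorial := by positivity
    field_simp
  rw [e, div_le_iff₀ (by positivity)]
  calc _ ≤ (n.factorial * (q⁻¹)^n * τ^(-|a+d|)) * (C1 * (q⁻¹)^n) * (n.factorial * (q⁻¹)^n * τ^(-|b|)) * (k.factorial * (q⁻¹)^k * ((τ⁻¹)^n * τ^(-|a|))) * (C2 * (q⁻¹)^k) * (k.factorial * (q⁻¹)^k * ((τ⁻¹)^n * τ^(-|b|))) * (j.factorial * (τ⁻¹)^j * ((q⁻¹)^(n+k) * q^(-|b|))) * ((1+τ)^k * (τ⁻¹)^m) := by gcongr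
    _ = _ := by rw [mul_pow _ (1+τ) k]; ring

lemma G_bd (a b d : ℝ) (hd : ∀ m : ℕ, d ≠ -(m : ℝ)) {σ : ℝ} (h0 : 0 < σ) (h1 : σ < 1) :
    ∃ C : ℝ, 0 < C ∧ ∀ n k : ℕ, |poch (-(n:ℝ)-a) k * poch ((n:ℝ)+b) k / (poch d k * k.factorial)| ≤
      C * (((1-σ)⁻¹)^2)^n * ((σ⁻¹)^3)^k := by
  have q0 : 0 < 1 - σ := by linarith
  obtain ⟨C2, hC2, H2⟩ := fact_bd hd h0 h1
  refine ⟨(1-σ)^(-|a|) * (1-σ)^(-|b|) * C2, by positivity, ?_⟩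
  intro n k
  have B4 := poch_bd_nat (x := -(n:ℝ)-a) (M := |a|) n (by
    have := abs_sub (-(n:ℝ)) a
    rw [abs_neg, Nat.abs_cast] at this; exact this) h0 h1 k
  have B6 := poch_bd_nat (x := (n:ℝ)+b) (M := |b|) n (by
    have := abs_add_le (n:ℝ) b
    rw [abs_of_nonneg (Nat.cast_nonneg n : (0:ℝ) ≤ n)] at this; linarith) h0 h1 k
  have B5 := H2 k
  have e : |poch (-(n:ℝ)-a) k * poch ((n:ℝ)+b) k / (poch d k * k.factorial)|
    = |poch (-(n:ℝ)-a) k| * |poch ((n:ℝ)+b) k| * (k.factorial / |poch d k|) / (k.factorial:ℝ)^2 := by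
    simp only [abs_mul, abs_div, Nat.abs_cast]
    have p2 := abs_pos.mpr (poch_ne _ hd k)
    have f2 : (0:ℝ) < k.factorial := by positivity
    field_simp
  rw [e, div_le_iff₀ (by positivity)]
  calc _ ≤ (k.factorial * (σ⁻¹)^k * (((1-σ)⁻¹)^n * (1-σ)^(-|a|))) * (k.factorial * (σ⁻¹)^k * (((1-σ)⁻¹)^n * (1-σ)^(-|b|))) * (C2 * (σ⁻¹)^k) := by gcongr
    _ = _ := by ring

/-- quadruple term -/
def TT (a b d Y Z : ℝ) (p : (ℕ × ℕ) × (ℕ × ℕ)) : ℝ :=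
  W a b d p.1.1 p.1.2 p.2.1 p.2.2 * Y^(p.1.1+p.2.1+p.2.2) * Z^(p.1.2+p.2.2)

/-- reorganized quadruple term, indices (N,K),(s,j) -/
def TR (a b d Y Z : ℝ) (p : (ℕ × ℕ) × (ℕ × ℕ)) : ℝ :=
  if p.2.2 ≤ p.2.1 ∧ p.2.1 ≤ p.1.1 ∧ p.2.1 ≤ p.1.2 then
    W a b d (p.1.1 - p.2.1) (p.1.2-p.2.2) (p.2.1-p.2.2) p.2.2 * Y^p.1.1 * Z^p.1.2 else 0

/-- reindexing -/
def psi (p : (ℕ × ℕ) × (ℕ × ℕ)) : (ℕ × ℕ) × (ℕ × ℕ) :=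
  ((p.1.1+p.2.1+p.2.2, p.1.2+p.2.2), (p.2.1+p.2.2, p.2.2))

lemma psi_inj : Function.Injective psi := by
  rintro ⟨⟨n,k⟩,⟨m,j⟩⟩ ⟨⟨n',k'⟩,⟨m',j'⟩⟩ h
  simp only [psi, Prod.mk.injEq] at h ⊢
  omega

lemma TR_mk (a b d Y Z : ℝ) (N K s j : ℕ) : TR a b d Y Z ((N,K),(s,j)) =
  if j ≤ s ∧ s ≤ N ∧ s ≤ K then
    W a b d (N - s) (K-j) (s-j) j * Y^N * Z^K else 0 := rfl

lemma TR_psi (a b d Y Z : ℝ) : TR a b d Y Z ∘ psi = TT a b d Y Z := by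
  ext ⟨⟨n,k⟩,⟨m,j⟩⟩
  change TR a b d Y Z ((n+m+j, k+j),(m+j,j)) = W a b d n k m j * Y^(n+m+j) * Z^(k+j)
  rw [TR_mk]
  by_cases h : m ≤ k
  · rw [if_pos (by omega)]
    congr 3 <;> omega
  · rw [if_neg (by omega)]
    simp [W, Nat.choose_eq_zero_of_lt (not_le.mp h)]

lemma TR_supp (a b d Y Z : ℝ) : ∀ p, p ∉ Set.range psi → TR a b d Y Z p = 0 := by
  rintro ⟨⟨N,K⟩,⟨s,j⟩⟩ h
  rw [TR_mk, if_neg]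
  rintro ⟨h1, h2, h3⟩
  apply h
  refine ⟨((N-s, K-j),(s-j,j)), ?_⟩
  change ((N-s+(s-j)+j, K-j+j),(s-j+j,j)) = _
  rw [show N-s+(s-j)+j = N by omega, show K-j+j = K by omega, show s-j+j=s by omega]

lemma TR_fiber (a b d Y Z : ℝ) (hd : ∀ m : ℕ, d ≠ -(m : ℝ)) (hab : ∀ m : ℕ, a + b + 1 ≠ -(m : ℝ))
    (N K : ℕ) : HasSum (fun q => TR a b d Y Z ((N,K),q))
      ((poch (a+d) N * poch b N / (poch (a+b+1) N * N.factorial)) * Y^N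
        * ((poch (-a) K * poch b K / (poch d K * K.factorial)) * Z^K)) := by
  have h : HasSum (fun q => TR a b d Y Z ((N,K),q)) (∑ q ∈ Finset.range (K+1) ×ˢ Finset.range (K+1), TR a b d Y Z ((N,K),q)) := hasSum_sum_of_ne_finset_zero (by
      rintro ⟨s,j⟩ hq
      rw [TR_mk, if_neg]
      rintro ⟨h1,h2,h3⟩
      apply hq
      simp only [Finset.mem_product, Finset.mem_range]
      omega)
  refine Eq.subst (motive := fun v => HasSum (fun q => TR a b d Y Z ((N,K),q)) v) ?_ h
  rw [Finset.sum_product]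
  have e : ∀ s ∈ Finset.range (K+1), ∑ j ∈ Finset.range (K+1), TR a b d Y Z ((N,K),(s,j))
     = (∑ j ∈ Finset.range (s+1), (if s ≤ N then W a b d (N-s) (K-j) (s-j) j else 0)) * (Y^N * Z^K) := by
    intro s hs
    have hs : s < K + 1 := by simpa using hs
    rw [Finset.sum_mul]
    rw [← Finset.sum_subset (s₁ := Finset.range (s+1))]
    · apply Finset.sum_congr rfl
      intro j hj
      have hj : j < s + 1 := by simpa using hj
      rw [TR_mk]
      by_cases hN : s ≤ N
      · rw [if_pos hN, if_pos (by omega)]; ring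
      · rw [if_neg hN, if_neg (by omega)]; ring
    · intro j hj
      simp only [Finset.mem_range] at hj ⊢
      omega
    · intro j _ hj
      simp only [Finset.mem_range] at hj
      rw [TR_mk]
      rw [if_neg (by omega)]
  rw [Finset.sum_congr rfl e, ← Finset.sum_mul, W_total a b d hd hab]
  ring

lemma TT_fiber (a b d Y Z : ℝ) (hYZ : |Y*Z| < 1) (n k : ℕ) :
    HasSum (fun q => TT a b d Y Z ((n,k),q))
      ((1-Y*Z)^(-b) * ((poch (d+a) n * poch b n / poch (a+b+1) n * (Y/(1-Y*Z))^n / n.factorial) *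
        (poch (-(n:ℝ)-a) k * poch ((n:ℝ)+b) k / (poch d k * k.factorial) * (Z*(1-Y)/(1-Y*Z))^k))) := by
  have h0 : 0 < 1 - Y*Z := by linarith [(abs_lt.mp hYZ).2]
  have hm : HasSum (fun m : ℕ => (k.choose m : ℝ) * (-Y)^m) ((1-Y)^k) := by
    have h : HasSum (fun m : ℕ => (k.choose m : ℝ) * (-Y)^m) (∑ m ∈ Finset.range (k+1), (k.choose m : ℝ) * (-Y)^m) := hasSum_sum_of_ne_finset_zero (by
        intro m hm
        simp only [Finset.mem_range] at hm
        rw [Nat.choose_eq_zero_of_lt (by omega)]; simp)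
    refine Eq.subst (motive := fun v => HasSum (fun m : ℕ => (k.choose m : ℝ) * (-Y)^m) v) ?_ h
    rw [show (1 - Y) = -Y + 1 by ring, add_pow]
    apply Finset.sum_congr rfl
    intro m _
    rw [one_pow]; ring
  have hj := (binom (b+(n+k:ℕ)) (Y*Z) hYZ)
  have hsm : Summable (fun m : ℕ => ‖(k.choose m : ℝ) * (-Y)^m‖) := hm.summable.norm
  have hsj := hj.summable.norm
  have hmul := hm.mul hj (summable_mul_of_summable_norm hsm hsj)
  have := hmul.mul_left (poch (a+d) n / (poch (a+b+1) n * n.factorial) * (poch (-(n:ℝ)-a) k / (poch d k * k.factorial)) * poch b (n+k) * Y^n * Z^k)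
  have e1 : (fun q => TT a b d Y Z ((n,k),q)) = fun i : ℕ × ℕ => (poch (a+d) n / (poch (a+b+1) n * n.factorial) * (poch (-(n:ℝ)-a) k / (poch d k * k.factorial)) * poch b (n+k) * Y^n * Z^k) *
        ((k.choose i.1 : ℝ) * (-Y)^i.1 * (poch (b+(n+k:ℕ)) i.2 / i.2.factorial * (Y*Z)^i.2)) := by
    ext ⟨m,j⟩
    simp only [TT, W]
    rw [poch_add b (n+k) j, neg_pow Y m]
    ring
  have e2 : ((1-Y*Z)^(-b) * ((poch (d+a) n * poch b n / poch (a+b+1) n * (Y/(1-Y*Z))^n / n.factorial) *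
        (poch (-(n:ℝ)-a) k * poch ((n:ℝ)+b) k / (poch d k * k.factorial) * (Z*(1-Y)/(1-Y*Z))^k)))
      = (poch (a+d) n / (poch (a+b+1) n * n.factorial) * (poch (-(n:ℝ)-a) k / (poch d k * k.factorial)) * poch b (n+k) * Y^n * Z^k) * ((1-Y)^k * (1-Y*Z)^(-(b+(n+k:ℕ)))) := by
    rw [neg_add, Real.rpow_add h0, Real.rpow_neg h0.le (n+k:ℕ), Real.rpow_natCast, poch_add b n k, add_comm d a, add_comm (n:ℝ) b]
    rw [div_pow, div_pow, mul_pow, pow_add]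
    generalize (1-Y*Z)^(-b) = t1
    generalize (1-Y*Z) = t2
    generalize 1 - Y = t3
    simp only [div_eq_mul_inv, mul_inv]
    ring
  rw [e1, e2]
  exact this

lemma exists_tau {z0 : ℝ} (h1 : z0 < 1) : ∃ τ : ℝ, 0 < τ ∧ τ < 1 ∧
    (((1-τ)⁻¹)^4*(1+τ)) * z0 < 1 := by
  have : Tendsto (fun τ : ℝ => (((1-τ)⁻¹)^4*(1+τ)) * z0) (𝓝[>] 0) (𝓝 ((((1-0)⁻¹)^4*(1+0)) * z0)) := by
    apply Tendsto.mono_left _ nhdsWithin_le_nhds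
    apply ContinuousAt.tendsto
    have : (1:ℝ) - 0 ≠ 0 := by norm_num
    fun_prop (disch := assumption)
  have h2 := this.eventually (gt_mem_nhds (by simpa using h1 : (((1-0)⁻¹)^4*(1+0)) * z0 < 1))
  have h3 : ∀ᶠ τ : ℝ in 𝓝[>] 0, τ < 1 := nhdsWithin_le_nhds (gt_mem_nhds one_pos)
  have h4 : ∀ᶠ τ : ℝ in 𝓝[>] 0, 0 < τ := self_mem_nhdsWithin
  obtain ⟨τ, a1, a2, a3⟩ := (h2.and (h3.and h4)).exists
  exact ⟨τ, a3, a2, a1⟩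

lemma TT_summable (a b d : ℝ) (hd : ∀ m : ℕ, d ≠ -(m : ℝ)) (hab : ∀ m : ℕ, a + b + 1 ≠ -(m : ℝ))
    {z0 : ℝ} (hz0 : 0 ≤ z0) (hz1 : z0 < 1) : ∃ δ : ℝ, 0 < δ ∧ δ < 1 ∧ ∀ Y Z : ℝ, |Y| < δ → |Z| ≤ z0 →
      Summable (TT a b d Y Z) := by
  obtain ⟨τ, t0, t1, ht⟩ := exists_tau hz1
  obtain ⟨C, P, hC, hP, hW⟩ := W_bd a b d hd hab t0 t1
  refine ⟨min (τ/2) (1/(2*P)), by positivity, lt_of_le_of_lt (min_le_left _ _) (by linarith), ?_⟩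
  intro Y Z hY hZ
  have y1 : |Y| < τ/2 := lt_of_lt_of_le hY (min_le_left _ _)
  have y2 : |Y| < 1/(2*P) := lt_of_lt_of_le hY (min_le_right _ _)
  set Q := (((1-τ)⁻¹)^4*(1+τ)) with hQ
  have q0 : 0 < 1 - τ := by linarith
  have hQ0 : 0 < Q := by positivity
  have r1 : P * |Y| < 1 := by
    rw [lt_div_iff₀ (by positivity)] at y2; nlinarith [abs_nonneg Y]
  have r2 : τ⁻¹ * |Y| < 1 := by
    rw [inv_mul_lt_iff₀ t0]; linarith
  have s1 : Summable (fun n : ℕ => (P*|Y|)^n) := summable_geometric_of_lt_one (by positivity) r1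
  have s2 : Summable (fun n : ℕ => (τ⁻¹ * |Y|)^n) := summable_geometric_of_lt_one (by positivity) r2
  have s3 : Summable (fun n : ℕ => (Q * z0)^n) := summable_geometric_of_lt_one (by positivity) ht
  have s12 := s1.mul_of_nonneg s3 (fun _ => by positivity) (fun _ => by positivity)
  have s34 := s2.mul_of_nonneg s2 (fun _ => by positivity) (fun _ => by positivity)
  have s := (s12.mul_of_nonneg s34 (fun _ => by positivity) (fun _ => by positivity)).mul_left C
  refine Summable.of_norm_bounded s ?_
  rintro ⟨⟨n,k⟩,⟨m,j⟩⟩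
  simp only [TT, Real.norm_eq_abs, abs_mul, abs_pow]
  have hz : |Z| ≤ 1 := by linarith
  calc _ ≤ (C * P^n * Q^k * (τ⁻¹)^m * (τ⁻¹)^j) * |Y|^(n+m+j) * (z0^k * 1^j) := by
        rw [pow_add |Z|]
        gcongr
        exact hW n k m j
    _ = _ := by rw [one_pow]; ring

lemma local_id (a b d : ℝ) (hd : ∀ m : ℕ, d ≠ -(m : ℝ)) (hab : ∀ m : ℕ, a + b + 1 ≠ -(m : ℝ))
    {z0 : ℝ} (hz0 : 0 ≤ z0) (hz1 : z0 < 1) : ∃ δ : ℝ, 0 < δ ∧ δ < 1 ∧ ∀ Y Z : ℝ, |Y| < δ → |Z| ≤ z0 →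
      ∑' n : ℕ, poch (d + a) n * poch b n / poch (a + b + 1) n
        * hyp (-(n:ℝ) - a) ((n:ℝ) + b) d (Z*(1-Y)/(1-Y*Z)) * (Y/(1-Y*Z))^n / (Nat.factorial n : ℝ)
      = (1-Y*Z)^b * hyp (-a) b d Z * hyp (a+d) b (a+b+1) Y := by
  obtain ⟨δ, h0, h1, H⟩ := TT_summable a b d hd hab hz0 hz1
  refine ⟨δ, h0, h1, ?_⟩
  intro Y Z hY hZ
  have hs := H Y Z hY hZ
  have hYZ : |Y*Z| < 1 := by
    rw [abs_mul]
    nlinarith [abs_nonneg Y, abs_nonneg Z]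
  have hp : 0 < 1 - Y*Z := by linarith [(abs_lt.mp hYZ).2]
  have hS := hs.hasSum
  have A := hS.prod_fiberwise (fun p : ℕ × ℕ => TT_fiber a b d Y Z hYZ p.1 p.2)
  have B0 : HasSum (TR a b d Y Z) (∑' p, TT a b d Y Z p) := by
    rw [← psi_inj.hasSum_iff (TR_supp a b d Y Z), TR_psi]; exact hS
  have B := B0.prod_fiberwise (fun p : ℕ × ℕ => TR_fiber a b d Y Z hd hab p.1 p.2)
  have A' := A.summable.tsum_prod
  have B' := B.summable.tsum_prod
  rw [A.tsum_eq] at A'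
  rw [B.tsum_eq] at B'
  simp only [tsum_mul_left, tsum_mul_right] at A' B'
  rw [A'] at B'
  have e : (1-Y*Z)^b * (1-Y*Z)^(-b) = 1 := by rw [← Real.rpow_add hp]; simp
  have hL : ∑' n : ℕ, poch (d + a) n * poch b n / poch (a + b + 1) n
        * hyp (-(n:ℝ) - a) ((n:ℝ) + b) d (Z*(1-Y)/(1-Y*Z)) * (Y/(1-Y*Z))^n / (Nat.factorial n : ℝ)
     = ∑' n : ℕ, (poch (d+a) n * poch b n / poch (a+b+1) n * (Y/(1-Y*Z))^n / n.factorial) *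
        ∑' k : ℕ, (poch (-(n:ℝ)-a) k * poch ((n:ℝ)+b) k / (poch d k * k.factorial) * (Z*(1-Y)/(1-Y*Z))^k) := by
    apply tsum_congr
    intro n
    simp only [hyp]
    ring
  rw [hL]
  calc _ = (1-Y*Z)^b * (1-Y*Z)^(-b) * ∑' n : ℕ, (poch (d+a) n * poch b n / poch (a+b+1) n * (Y/(1-Y*Z))^n / n.factorial) *
        ∑' k : ℕ, (poch (-(n:ℝ)-a) k * poch ((n:ℝ)+b) k / (poch d k * k.factorial) * (Z*(1-Y)/(1-Y*Z))^k) := by rw [e, one_mul]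
    _ = _ := by
      rw [mul_assoc, B']
      simp only [hyp]
      ring

/-- subexponential growth of a sequence of coefficients -/
def SubExp (c : ℕ → ℝ) : Prop := ∀ σ : ℝ, 0 < σ → σ < 1 → ∃ C : ℝ, ∀ k, |c k| * σ^k ≤ C

lemma SubExp.mul {c e : ℕ → ℝ} (hc : SubExp c) (he : SubExp e) : SubExp (fun k => c k * e k) := by
  intro σ h0 h1
  have s0 : 0 < √σ := Real.sqrt_pos.mpr h0
  have s1 : √σ < 1 := by rw [Real.sqrt_lt' one_pos]; simpa using h1
  obtain ⟨C, hC⟩ := hc _ s0 s1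
  obtain ⟨E, hE⟩ := he _ s0 s1
  refine ⟨C * E, fun k => ?_⟩
  have : σ = √σ * √σ := (Real.mul_self_sqrt h0.le).symm
  calc |c k * e k| * σ^k = (|c k| * √σ^k) * (|e k| * √σ^k) := by
        rw [abs_mul]; nth_rewrite 1 [this]; rw [mul_pow]; ring
    _ ≤ C * E := by
        have : 0 ≤ C := le_trans (by positivity) (hC 0)
        gcongr
        · exact hC k
        · exact hE k

lemma SubExp.shift {c : ℕ → ℝ} (hc : SubExp c) : SubExp (fun k => c (k+1)) := by
  intro σ h0 h1
  obtain ⟨C, hC⟩ := hc _ h0 h1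
  refine ⟨C / σ, fun k => ?_⟩
  rw [le_div_iff₀ h0]
  calc _ = |c (k+1)| * σ^(k+1) := by ring
    _ ≤ C := hC _

lemma subExp_nat : SubExp (fun k => (k:ℝ) + 1) := by
  intro σ h0 h1
  have h : Tendsto (fun n : ℕ => (n:ℝ) * σ^n) atTop (𝓝 0) := tendsto_self_mul_const_pow_of_lt_one h0.le h1
  obtain ⟨C, hC⟩ := h.bddAbove_range
  refine ⟨C + 1, fun k => ?_⟩
  have h2 := hC ⟨k, rfl⟩
  have h3 : σ^k ≤ 1 := pow_le_one₀ h0.le h1.le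
  rw [abs_of_nonneg (by positivity)]
  simp only at h2
  linarith

lemma SubExp.deriv {c : ℕ → ℝ} (hc : SubExp c) : SubExp (fun k => ((k:ℝ)+1) * c (k+1)) :=
  subExp_nat.mul hc.shift

lemma SubExp.summable {c : ℕ → ℝ} (hc : SubExp c) {x : ℝ} (hx : |x| < 1) : Summable (fun k => |c k| * |x|^k) := by
  obtain ⟨σ, h1, h2⟩ := exists_between hx
  have h0 : 0 < σ := (abs_nonneg x).trans_lt h1
  obtain ⟨C, hC⟩ := hc σ h0 h2
  have s : Summable (fun k : ℕ => (|x|/σ)^k) := summable_geometric_of_lt_one (by positivity) (by rwa [div_lt_one h0])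
  refine Summable.of_nonneg_of_le (fun k => by positivity) (fun k => ?_) (s.mul_left C)
  calc |c k| * |x|^k = (|c k| * σ^k) * (|x|/σ)^k := by rw [div_pow]; field_simp
    _ ≤ C * _ := by gcongr; exact hC k

lemma SubExp.summable' {c : ℕ → ℝ} (hc : SubExp c) {x : ℝ} (hx : |x| < 1) : Summable (fun k => c k * x^k) := by
  apply Summable.of_norm
  simpa [abs_mul, abs_pow] using hc.summable hx

lemma SubExp.analytic {c : ℕ → ℝ} (hc : SubExp c) : AnalyticOnNhd ℝ (fun x => ∑' k, c k * x^k) (Set.Ioo (-1) 1) := by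
  set p := FormalMultilinearSeries.ofScalars ℝ c with hp
  have hr : 1 ≤ p.radius := by
    apply ENNReal.le_of_forall_nnreal_lt
    intro r hr
    have hr1 : (r:ℝ) < 1 := by exact_mod_cast hr
    by_cases h0 : r = 0
    · simp [h0]
    have hr0 : (0:ℝ) < r := by exact_mod_cast pos_iff_ne_zero.mpr h0
    obtain ⟨C, hC⟩ := hc r hr0 hr1
    apply p.le_radius_of_bound C
    intro n
    have : ‖p n‖ = |c n| := by rw [hp, FormalMultilinearSeries.ofScalars_norm]; rfl
    rw [this]; exact hC n
  have h := p.hasFPowerSeriesOnBall (lt_of_lt_of_le one_pos hr)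
  have e : p.sum = fun x => ∑' k, c k * x^k := by
    ext x
    simp only [FormalMultilinearSeries.sum, hp, FormalMultilinearSeries.ofScalars_apply_eq, smul_eq_mul]
  rw [e] at h
  apply h.analyticOnNhd.mono
  intro x hx
  have hx1 : |x| < 1 := abs_lt.mpr hx
  simp only [Metric.mem_eball, edist_zero_right]
  refine lt_of_lt_of_le ?_ hr
  rw [← ofReal_norm, ENNReal.ofReal_lt_one]
  exact hx1

lemma SubExp.hasDerivAt {c : ℕ → ℝ} (hc : SubExp c) {x : ℝ} (hx : |x| < 1) :
    HasDerivAt (fun x => ∑' k, c k * x^k) (∑' k : ℕ, (((k:ℝ)+1) * c (k+1)) * x^k) x := by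
  obtain ⟨r, h1, h2⟩ := exists_between hx
  have h0 : 0 < r := (abs_nonneg x).trans_lt h1
  have hs := hc.deriv.summable (x := r) (by rwa [abs_of_pos h0])
  rw [abs_of_pos h0] at hs
  have hu : Summable (fun k : ℕ => |(k:ℝ) * c k| * r^(k-1)) := by
    rw [← summable_nat_add_iff 1]
    simpa using hs
  have H := hasDerivAt_tsum_of_isPreconnected (g := fun k x => c k * x^k) (g' := fun k x => c k * ((k:ℝ) * x^(k-1)))
    (t := Set.Ioo (-r) r) (y₀ := 0) (y := x) hu isOpen_Ioo isPreconnected_Ioo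
    (fun n y _ => (hasDerivAt_pow n y).const_mul (c n))
    (fun n y hy => by
      have : |y| < r := abs_lt.mpr hy
      rw [Real.norm_eq_abs, ← mul_assoc, abs_mul, abs_pow, mul_comm (c n)]
      gcongr) ⟨by linarith, h0⟩ (hc.summable' (by simp)) (abs_lt.mp h1)
  have e : ∑' k : ℕ, (((k:ℝ)+1) * c (k+1)) * x^k = ∑' k : ℕ, c k * ((k:ℝ) * x^(k-1)) := by
    have hs2 : Summable (fun k : ℕ => c k * ((k:ℝ) * x^(k-1))) := by
      apply Summable.of_norm_bounded hu
      intro n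
      rw [Real.norm_eq_abs, ← mul_assoc, abs_mul, abs_pow, mul_comm (c n)]
      gcongr
    rw [hs2.tsum_eq_zero_add]
    simp only [Nat.cast_zero, zero_mul, mul_zero, zero_add, Nat.add_sub_cancel]
    apply tsum_congr
    intro k
    push_cast; ring
  rw [e]
  exact H

lemma subExp_poch (a : ℝ) : SubExp (fun k => poch a k / k.factorial) := by
  intro σ h0 h1
  refine ⟨(1-σ)^(-|a|), fun k => ?_⟩
  have := poch_bd (le_refl |a|) h0 h1 k
  have hk : (0:ℝ) < k.factorial := by positivity
  rw [abs_div, Nat.abs_cast, div_mul_eq_mul_div, div_le_iff₀ hk]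
  calc _ ≤ (k.factorial * (σ⁻¹)^k * (1-σ)^(-|a|)) * σ^k := by gcongr
    _ = _ := by rw [inv_pow]; field_simp

lemma subExp_fact {d : ℝ} (hd : ∀ m : ℕ, d ≠ -(m : ℝ)) : SubExp (fun k => k.factorial / poch d k) := by
  intro σ h0 h1
  obtain ⟨C, hC, H⟩ := fact_bd hd h0 h1
  refine ⟨C, fun k => ?_⟩
  rw [abs_div, Nat.abs_cast]
  calc _ ≤ C * (σ⁻¹)^k * σ^k := by gcongr; exact H k
    _ = _ := by rw [inv_pow]; field_simp

lemma subExp_hyp (a b : ℝ) {d : ℝ} (hd : ∀ m : ℕ, d ≠ -(m : ℝ)) : SubExp (fun k => poch a k * poch b k / (poch d k * k.factorial)) := by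
  have h := ((subExp_poch a).mul (subExp_poch b)).mul (subExp_fact hd)
  have e : (fun k : ℕ => poch a k * poch b k / (poch d k * k.factorial)) = (fun k : ℕ => poch a k / k.factorial * (poch b k / k.factorial) * (k.factorial / poch d k)) := by
    ext k
    have hk : (k.factorial:ℝ) ≠ 0 := by positivity
    have := poch_ne d hd k
    field_simp
  rw [e]; exact h

lemma hyp_analytic (a b : ℝ) {d : ℝ} (hd : ∀ m : ℕ, d ≠ -(m : ℝ)) : AnalyticOnNhd ℝ (hyp a b d) (Set.Ioo (-1) 1) :=
  (subExp_hyp a b hd).analytic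

/-- Pfaff double sum term -/
def PT (a b c z : ℝ) (p : ℕ × ℕ) : ℝ :=
  poch a (p.1+p.2) * (poch (c-b) p.1 / (poch c p.1 * p.1.factorial)) / p.2.factorial * (-1)^p.1 * z^(p.1+p.2)

/-- Pfaff reorganized term -/
def PR (a b c z : ℝ) (p : ℕ × ℕ) : ℝ :=
  if p.2 ≤ p.1 then PT a b c z (p.2, p.1 - p.2) else 0

lemma PT_summable (a b c z : ℝ) (hc : ∀ m : ℕ, c ≠ -(m : ℝ)) (hz : |z| < 1/16) : Summable (PT a b c z) := by
  have hh : (0:ℝ) < 1/2 := by norm_num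
  have hh1 : (1/2:ℝ) < 1 := by norm_num
  obtain ⟨C1, h1⟩ := subExp_poch a (1/2) hh hh1
  obtain ⟨C2, h2⟩ := ((subExp_poch (c-b)).mul (subExp_fact hc)) (1/4) (by norm_num) (by norm_num)
  have n1 : 0 ≤ C1 := le_trans (by positivity) (h1 0)
  have n2 : 0 ≤ C2 := le_trans (by positivity) (h2 0)
  have s1 : Summable (fun n : ℕ => (16*|z|)^n) := summable_geometric_of_lt_one (by positivity) (by linarith)
  have s2 : Summable (fun n : ℕ => (4*|z|)^n) := summable_geometric_of_lt_one (by positivity) (by linarith)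
  have s := (s1.mul_of_nonneg s2 (fun _ => by positivity) (fun _ => by positivity)).mul_left (C1*C2)
  refine Summable.of_norm_bounded s ?_
  rintro ⟨k,j⟩
  have a1 := h1 (k+j)
  have a2 := h2 k
  have a3 : ((k+j).factorial : ℝ) ≤ 2^(k+j) * (k.factorial * j.factorial) := by
    have e := Nat.add_choose_mul_factorial_mul_factorial k j
    have e2 : (k+j).choose j ≤ 2^(k+j) := Nat.choose_le_two_pow _ _
    rw [← e]
    push_cast
    rw [mul_assoc]
    gcongr
    exact_mod_cast e2
  have hk : (0:ℝ) < k.factorial := by positivity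
  have hj : (0:ℝ) < j.factorial := by positivity
  have hkj : (0:ℝ) < (k+j).factorial := by positivity
  have hp := poch_ne c hc k
  simp only [PT, Real.norm_eq_abs]
  calc |poch a (k+j) * (poch (c-b) k / (poch c k * k.factorial)) / j.factorial * (-1)^k * z^(k+j)|
      = (|poch a (k+j) / (k+j).factorial| * (1/2)^(k+j)) * (|poch (c-b) k / k.factorial * (k.factorial / poch c k)| * (1/4)^k)
          * ((k+j).factorial / (k.factorial * j.factorial)) * (2^(k+j) * 4^k * |z|^(k+j)) := by
        simp only [abs_mul, abs_div, abs_pow, Nat.abs_cast, abs_neg, abs_one, one_pow, mul_one]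
        have := abs_pos.mpr hp
        rw [div_pow, div_pow]
        field_simp
        simp only [one_pow, mul_one]
    _ ≤ C1 * C2 * 2^(k+j) * (2^(k+j) * 4^k * |z|^(k+j)) := by
        gcongr
        rw [div_le_iff₀ (by positivity)]; exact a3
    _ = _ := by
        simp only [mul_pow, pow_add, show (16:ℝ) = 2*2*4 by norm_num, show (4:ℝ)=2*2 by norm_num]
        ring

lemma PT_fiber (a b c z : ℝ) (hz : |z| < 1) (k : ℕ) :
    HasSum (fun j => PT a b c z (k,j)) ((1-z)^(-a) * (poch a k * poch (c-b) k / (poch c k * k.factorial) * (z/(z-1))^k)) := by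
  have h0 : 0 < 1 - z := by linarith [(abs_lt.mp hz).2]
  have h := (binom (a+k) z hz).mul_left (poch a k * poch (c-b) k / (poch c k * k.factorial) * (-z)^k)
  have e1 : (fun j => PT a b c z (k,j)) = fun j : ℕ => (poch a k * poch (c-b) k / (poch c k * k.factorial) * (-z)^k) * (poch (a+k) j / j.factorial * z^j) := by
    ext j
    simp only [PT]
    rw [poch_add, neg_pow z k, pow_add]
    ring
  have e2 : ((1-z)^(-a) * (poch a k * poch (c-b) k / (poch c k * k.factorial) * (z/(z-1))^k)) = (poch a k * poch (c-b) k / (poch c k * k.factorial) * (-z)^k) * (1-z)^(-(a+k)) := by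
    rw [neg_add, Real.rpow_add h0, Real.rpow_neg h0.le k, Real.rpow_natCast, show z/(z-1) = (-z)/(1-z) by
      rw [← neg_sub z 1, neg_div_neg_eq], div_pow]
    ring
  rw [e1, e2]; exact h

lemma PR_fiber (a b c z : ℝ) (hc : ∀ m : ℕ, c ≠ -(m : ℝ)) (N : ℕ) :
    HasSum (fun k => PR a b c z (N,k)) (poch a N * poch b N / (poch c N * N.factorial) * z^N) := by
  have h : HasSum (fun k => PR a b c z (N,k)) (∑ k ∈ Finset.range (N+1), PR a b c z (N,k)) := hasSum_sum_of_ne_finset_zero (by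
      intro k hk
      simp only [Finset.mem_range] at hk
      simp only [PR]
      rw [if_neg (by omega)])
  have e : ∑ k ∈ Finset.range (N+1), PR a b c z (N,k) = (poch a N * poch b N / (poch c N * N.factorial) * z^N) := by
    have := chu N (c-b) c hc
    rw [sub_sub_cancel] at this
    have e2 : (poch a N * poch b N / (poch c N * N.factorial) * z^N) = poch a N * z^N / N.factorial * (poch b N / poch c N) := by
      simp only [div_eq_mul_inv, mul_inv]; ring
    rw [e2, ← this, Finset.mul_sum]
    apply Finset.sum_congr rfl
    intro k hk
    have hk : k ≤ N := by simp only [Finset.mem_range] at hk; omega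
    simp only [PR, PT]
    rw [if_pos hk, show k + (N-k) = N by omega, Nat.cast_choose ℝ hk]
    have h1 : (N.factorial : ℝ) ≠ 0 := by positivity
    have h2 : (k.factorial : ℝ) ≠ 0 := by positivity
    have h3 : ((N-k).factorial : ℝ) ≠ 0 := by positivity
    have h4 := poch_ne c hc k
    field_simp
  rw [← e]; exact h

lemma pfaff (a b c z : ℝ) (hc : ∀ m : ℕ, c ≠ -(m : ℝ)) (hz : |z| < 1/16) :
    (1-z)^(-a) * hyp a (c-b) c (z/(z-1)) = hyp a b c z := by
  have hS := (PT_summable a b c z hc hz).hasSum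
  have A := hS.prod_fiberwise (fun k => PT_fiber a b c z (by linarith) k)
  have inj : Function.Injective (fun p : ℕ × ℕ => (p.1+p.2, p.1)) := by
    rintro ⟨k,j⟩ ⟨k',j'⟩ h
    simp only [Prod.mk.injEq] at h ⊢
    omega
  have B0 : HasSum (PR a b c z) (∑' p, PT a b c z p) := by
    rw [← inj.hasSum_iff]
    · have : PR a b c z ∘ (fun p : ℕ × ℕ => (p.1+p.2, p.1)) = PT a b c z := by
        ext ⟨k,j⟩
        simp [PR]
      rw [this]; exact hS
    · rintro ⟨N,k⟩ h
      simp only [PR]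
      rw [if_neg]
      intro h2
      apply h
      exact ⟨(k,N-k), Prod.ext (show k + (N-k) = N by omega) rfl⟩
  have B := B0.prod_fiberwise (fun N => PR_fiber a b c z hc N)
  simp only [hyp]
  rw [← tsum_mul_left, A.tsum_eq, B.tsum_eq]

lemma hypExt_eq (a b c z : ℝ) (hc : ∀ m : ℕ, c ≠ -(m : ℝ)) (hz : |z| < 1/16) : hypExt a b c z = hyp a b c z := by
  unfold hypExt
  split_ifs
  · exact pfaff a b c z hc hz
  · rfl

lemma rpow_analytic {f : ℝ → ℝ} {x : ℝ} (hf : AnalyticAt ℝ f x) (h : 0 < f x) (p : ℝ) : AnalyticAt ℝ (fun y => f y ^ p) x := by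
  have h1 : AnalyticAt ℝ (fun y => Real.exp (Real.log (f y) * p)) x := by
    have := (hf.log h).mul (analyticAt_const (v := p))
    exact this.rexp
  refine h1.congr ?_
  filter_upwards [hf.continuousAt.eventually (lt_mem_nhds h)] with y hy
  rw [Real.rpow_def_of_pos hy]

lemma hypExt_analytic (a b c z : ℝ) (hc : ∀ m : ℕ, c ≠ -(m : ℝ)) (hz : z < 1) : AnalyticAt ℝ (hypExt a b c) z := by
  by_cases h : z < 0
  · have h1 : AnalyticAt ℝ (fun z => (1 - z) ^ (-a) * hyp a (c - b) c (z / (z - 1))) z := by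
      apply AnalyticAt.mul
      · apply rpow_analytic (by fun_prop) (by linarith)
      · have h2 : AnalyticAt ℝ (fun z : ℝ => z/(z-1)) z := by
          apply AnalyticAt.div (by fun_prop) (by fun_prop)
          linarith
        have h3 : AnalyticAt ℝ (hyp a (c-b) c) (z/(z-1)) := by
          apply hyp_analytic _ _ hc
          constructor
          · have : 0 < z/(z-1) := div_pos_of_neg_of_neg h (by linarith)
            linarith
          · rw [div_lt_one_of_neg (by linarith)]; linarith
        exact AnalyticAt.fun_comp (f := fun z : ℝ => z/(z-1)) h3 h2
    refine h1.congr ?_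
    filter_upwards [gt_mem_nhds h] with y hy
    simp [hypExt, hy]
  · by_cases h' : z = 0
    · have h1 := hyp_analytic a b hc z ⟨by linarith, hz⟩
      refine h1.congr ?_
      have : Metric.ball (0:ℝ) (1/16) ∈ 𝓝 z := by rw [h']; exact Metric.ball_mem_nhds _ (by norm_num)
      filter_upwards [this] with y hy
      rw [hypExt_eq _ _ _ _ hc (by simpa using hy)]
    · have hp : 0 < z := lt_of_le_of_ne (not_lt.mp h) (Ne.symm h')
      have h1 := hyp_analytic a b hc z ⟨by linarith, hz⟩
      refine h1.congr ?_
      filter_upwards [lt_mem_nhds hp] with y hy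
      simp [hypExt, not_lt.mpr hy.le]

lemma hasSum_shift {c : ℕ → ℝ} {x S : ℝ} (h : HasSum (fun k : ℕ => (((k:ℝ)+1) * c (k+1)) * x^k) S) :
    HasSum (fun k : ℕ => (k:ℝ) * c k * x^k) (x * S) := by
  have h2 := h.mul_left x
  rw [← hasSum_nat_add_iff' 1]
  have e : (fun n : ℕ => ((n+1:ℕ):ℝ) * c (n+1) * x^(n+1)) = fun k : ℕ => x * ((((k:ℝ)+1) * c (k+1)) * x^k) := by
    ext k; push_cast; ring
  rw [e]
  simpa using h2

/-- coefficients of the hypergeometric series -/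
def hc (A B d : ℝ) (k : ℕ) : ℝ := poch A k * poch B k / (poch d k * k.factorial)

lemma hc_rec (A B d : ℝ) (hd : ∀ m : ℕ, d ≠ -(m : ℝ)) (k : ℕ) :
    ((k:ℝ)+1) * hc A B d (k+1) * (k + d) = (A+k)*(B+k) * hc A B d k := by
  have h1 := poch_ne d hd k
  have h2 : d + k ≠ 0 := fun h => hd k (by linarith)
  have h3 : (k.factorial : ℝ) ≠ 0 := by positivity
  have h4 : (k:ℝ) + 1 ≠ 0 := by positivity
  simp only [hc, poch_succ, Nat.factorial_succ]
  push_cast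
  rw [add_comm (k:ℝ) d]
  field_simp

/-- first derivative series -/
def h1 (A B d x : ℝ) : ℝ := ∑' k : ℕ, (((k:ℝ)+1) * hc A B d (k+1)) * x^k
/-- second derivative series -/
def h2 (A B d x : ℝ) : ℝ := ∑' k : ℕ, (((k:ℝ)+1) * (((k+1:ℕ):ℝ)+1) * hc A B d (k+1+1)) * x^k

lemma hc_sub (A B : ℝ) {d : ℝ} (hd : ∀ m : ℕ, d ≠ -(m : ℝ)) : SubExp (hc A B d) := subExp_hyp A B hd

lemma hyp_deriv (A B : ℝ) {d : ℝ} (hd : ∀ m : ℕ, d ≠ -(m : ℝ)) {x : ℝ} (hx : |x| < 1) :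
    HasDerivAt (hyp A B d) (h1 A B d x) x := (hc_sub A B hd).hasDerivAt hx

lemma h1_deriv (A B : ℝ) {d : ℝ} (hd : ∀ m : ℕ, d ≠ -(m : ℝ)) {x : ℝ} (hx : |x| < 1) :
    HasDerivAt (h1 A B d) (h2 A B d x) x := by
  have h := (hc_sub A B hd).deriv.hasDerivAt hx
  have e : h2 A B d x = ∑' k : ℕ, (((k:ℝ)+1) * ((((k+1:ℕ):ℝ)+1) * hc A B d (k+1+1))) * x^k := by
    simp only [h2, mul_assoc]
  rw [e]; exact h

lemma ode (A B : ℝ) {d : ℝ} (hd : ∀ m : ℕ, d ≠ -(m : ℝ)) {x : ℝ} (hx : |x| < 1) :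
    x*(1-x) * h2 A B d x + (d - (A+B+1)*x) * h1 A B d x - A*B*hyp A B d x = 0 := by
  have s0 : HasSum (fun k : ℕ => hc A B d k * x^k) (hyp A B d x) := ((hc_sub A B hd).summable' hx).hasSum
  have s1 : HasSum (fun k : ℕ => (((k:ℝ)+1) * hc A B d (k+1)) * x^k) (h1 A B d x) := ((hc_sub A B hd).deriv.summable' hx).hasSum
  have s2 : HasSum (fun k : ℕ => (((k:ℝ)+1) * ((((k+1:ℕ):ℝ)+1) * hc A B d (k+1+1))) * x^k) (h2 A B d x) := by
    have h := ((hc_sub A B hd).deriv.deriv.summable' hx).hasSum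
    have e : h2 A B d x = ∑' k : ℕ, (((k:ℝ)+1) * ((((k+1:ℕ):ℝ)+1) * hc A B d (k+1+1))) * x^k := by
      simp only [h2, mul_assoc]
    rw [e]; exact h
  have t1 := hasSum_shift s1
  have t2 := hasSum_shift (c := fun k => ((k:ℝ)+1) * hc A B d (k+1)) s2
  have t3 : HasSum (fun k : ℕ => (k:ℝ) * (((k:ℝ)-1) * hc A B d k) * x^k) (x * (x * h2 A B d x)) := by
    apply hasSum_shift (c := fun k => ((k:ℝ)-1) * hc A B d k)
    have e : (fun k : ℕ => ((k:ℝ)+1) * ((((k+1:ℕ):ℝ)-1) * hc A B d (k+1)) * x^k) = (fun k : ℕ => (k:ℝ) * (((k:ℝ)+1) * hc A B d (k+1)) * x^k) := by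
      ext k; push_cast; ring
    rw [e]; exact t2
  have T := (((t2.sub t3).add (s1.mul_left d)).sub (t1.mul_left (A+B+1))).sub (s0.mul_left (A*B))
  have e : (fun k : ℕ => (k:ℝ) * (((k:ℝ)+1) * hc A B d (k+1)) * x^k - (k:ℝ) * (((k:ℝ)-1) * hc A B d k) * x^k
      + d * ((((k:ℝ)+1) * hc A B d (k+1)) * x^k) - (A+B+1) * ((k:ℝ) * hc A B d k * x^k) - A*B*(hc A B d k * x^k)) = fun _ => 0 := by
    ext k
    have := hc_rec A B d hd k
    linear_combination x^k * this
  have T' := T.tsum_eq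
  rw [e, tsum_zero] at T'
  linarith

lemma energy (A B : ℝ) {d : ℝ} (hd : ∀ m : ℕ, d ≠ -(m : ℝ)) {ε x K : ℝ} (h0 : 0 < ε) (hεx : ε ≤ x) (hx : x < 1)
    (hAB : 0 ≤ -(A*B)) (hK : 3 + 2*|d| + 2*|A+B+1| ≤ K * (ε * (1-x))) :
    (-(A*B)) * hyp A B d x^2 ≤ ((-(A*B)) * hyp A B d ε^2 + h1 A B d ε^2) * Real.exp (K * (x-ε)) := by
  set E : ℝ → ℝ := fun y => (-(A*B)) * hyp A B d y^2 + y*(1-y) * h1 A B d y^2 with hE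
  have hlt : ∀ y, y ∈ Set.Icc ε x → |y| < 1 := fun y hy => abs_lt.mpr ⟨by linarith [hy.1], by linarith [hy.2]⟩
  have hder : ∀ y, y ∈ Set.Icc ε x → HasDerivAt (fun y => E y * Real.exp (-(K*y)))
     ((h1 A B d y^2 * (1 - 2*y - 2*d + 2*(A+B+1)*y) - K * E y) * Real.exp (-(K*y))) y := by
    intro y hy
    have d0 := hyp_deriv A B hd (hlt y hy)
    have d1 := h1_deriv A B hd (hlt y hy)
    have o := ode A B hd (hlt y hy)
    have q : HasDerivAt (fun y : ℝ => y*(1-y)) (1*(1-y) + y*(-1)) y :=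
      (hasDerivAt_id y).mul ((hasDerivAt_id y).const_sub 1)
    have ex : HasDerivAt (fun y : ℝ => Real.exp (-(K*y))) (Real.exp (-(K*y)) * (-(K*1))) y :=
      (((hasDerivAt_id y).const_mul K).neg).exp
    have D := (((d0.pow 2).const_mul (-(A*B))).add (q.mul (d1.pow 2))).mul ex
    refine D.congr_deriv ?_
    simp only [hE, Pi.add_apply, Pi.mul_apply, Pi.pow_apply]
    push_cast
    linear_combination (2 * h1 A B d y * Real.exp (-(K*y))) * o
  have anti : AntitoneOn (fun y => E y * Real.exp (-(K*y))) (Set.Icc ε x) := by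
    apply antitoneOn_of_deriv_nonpos (convex_Icc _ _)
    · intro y hy; exact (hder y hy).continuousAt.continuousWithinAt
    · intro y hy
      exact (hder y (interior_subset hy)).differentiableAt.differentiableWithinAt
    · intro y hy
      have hy := interior_subset hy
      rw [(hder y hy).deriv]
      apply mul_nonpos_of_nonpos_of_nonneg _ (Real.exp_pos _).le
      have y0 : 0 < y := by linarith [hy.1]
      have y1 : y < 1 := by linarith [hy.2]
      have b1 : 1 - 2*y - 2*d + 2*(A+B+1)*y ≤ 3 + 2*|d| + 2*|A+B+1| := by
        have := neg_abs_le d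
        have t1 : (A+B+1)*y ≤ |A+B+1| := by
          have := le_abs_self (A+B+1)
          nlinarith [abs_nonneg (A+B+1)]
        linarith
      have p1 : 0 < ε * (1-x) := mul_pos h0 (by linarith)
      have K0 : 0 ≤ K := by
        by_contra hneg
        push Not at hneg
        have : K * (ε*(1-x)) < 0 := mul_neg_of_neg_of_pos hneg p1
        linarith [abs_nonneg d, abs_nonneg (A+B+1)]
      have b2 : ε*(1-x) ≤ y*(1-y) := by
        apply mul_le_mul hy.1 (by linarith [hy.2]) (by linarith) y0.le
      have b3 : 1 - 2*y - 2*d + 2*(A+B+1)*y ≤ K * (y*(1-y)) := by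
        have := mul_le_mul_of_nonneg_left b2 K0
        linarith
      have b4 := mul_le_mul_of_nonneg_left b3 (sq_nonneg (h1 A B d y))
      have b5 : 0 ≤ K * ((-(A*B)) * hyp A B d y^2) := by positivity
      simp only [hE]
      nlinarith
  have F := anti ⟨le_refl ε, hεx⟩ ⟨hεx, le_refl x⟩ hεx
  simp only [hE] at F
  have e0 := Real.exp_pos (K*x)
  have F2 := mul_le_mul_of_nonneg_right F e0.le
  rw [mul_assoc _ (Real.exp (-(K*x))), mul_assoc _ (Real.exp (-(K*ε))), ← Real.exp_add, ← Real.exp_add, show -(K*x) + K*x = 0 by ring, Real.exp_zero, mul_one,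
    show -(K*ε) + K*x = K*(x-ε) by ring] at F2
  have g1 : 0 ≤ x*(1-x) * h1 A B d x^2 := by
    have : 0 ≤ x*(1-x) := mul_nonneg (by linarith) (by linarith)
    positivity
  have g2 : ε*(1-ε) * h1 A B d ε^2 ≤ h1 A B d ε^2 := by
    have : ε*(1-ε) ≤ 1 := by nlinarith
    nlinarith [sq_nonneg (h1 A B d ε)]
  have g3 := mul_le_mul_of_nonneg_right (add_le_add_right g2 ((-(A*B)) * hyp A B d ε^2)) (Real.exp_pos (K*(x-ε))).le
  linarith

lemma G_small (a b : ℝ) {d : ℝ} (hd : ∀ m : ℕ, d ≠ -(m : ℝ)) {σ ε : ℝ} (h0 : 0 < σ) (hσ : σ < 1) (he : 0 < ε) (hε : ε < σ^3) :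
    ∃ D : ℝ, 0 < D ∧ ∀ n : ℕ, |hyp (-(n:ℝ)-a) ((n:ℝ)+b) d ε| ≤ D * (((1-σ)⁻¹)^2)^n ∧
      |h1 (-(n:ℝ)-a) ((n:ℝ)+b) d ε| ≤ D * (((1-σ)⁻¹)^2)^n := by
  obtain ⟨C, hC, H⟩ := G_bd a b d hd h0 hσ
  set r := (σ⁻¹)^3 * ε with hr
  have r0 : 0 < r := by positivity
  have r1 : r < 1 := by
    rw [hr, inv_pow, inv_mul_lt_iff₀ (by positivity)]; linarith
  have q0 : 0 < 1 - σ := by linarith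
  have e1 : |ε| < 1 := by
    rw [abs_of_pos he]
    exact hε.trans (pow_lt_one₀ h0.le hσ (by norm_num))
  have t0 : Summable (fun k : ℕ => r^k) := summable_geometric_of_lt_one r0.le r1
  have t1 : Summable (fun k : ℕ => ((k:ℝ)+1) * r^k) := subExp_nat.summable' (by rwa [abs_of_pos r0])
  set S0 := ∑' k : ℕ, r^k
  set S1 := ∑' k : ℕ, ((k:ℝ)+1) * r^k
  have S0n : 0 ≤ S0 := tsum_nonneg (fun k => by positivity)
  have S1n : 0 ≤ S1 := tsum_nonneg (fun k => by positivity)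
  refine ⟨C * S0 + C * (σ⁻¹)^3 * S1 + 1, by positivity, fun n => ⟨?_, ?_⟩⟩
  · have : |hyp (-(n:ℝ)-a) ((n:ℝ)+b) d ε| ≤ (C * (((1-σ)⁻¹)^2)^n) * S0 := by
      rw [← Real.norm_eq_abs]
      apply tsum_of_norm_bounded (t0.hasSum.mul_left _)
      intro k
      rw [Real.norm_eq_abs, abs_mul, abs_pow, abs_of_pos he, hr, mul_pow, ← mul_assoc]
      gcongr
      exact H n k
    have X : 0 ≤ (C * (σ⁻¹)^3 * S1 + 1) * (((1-σ)⁻¹)^2)^n := by positivity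
    linarith
  · have : |h1 (-(n:ℝ)-a) ((n:ℝ)+b) d ε| ≤ (C * (((1-σ)⁻¹)^2)^n * (σ⁻¹)^3) * S1 := by
      rw [← Real.norm_eq_abs]
      apply tsum_of_norm_bounded (t1.hasSum.mul_left _)
      intro k
      rw [Real.norm_eq_abs, abs_mul, abs_mul, abs_pow, abs_of_pos he, hr, mul_pow, abs_of_nonneg (by positivity : 0 ≤ (k:ℝ)+1)]
      calc ((k:ℝ)+1) * |hc (-(n:ℝ)-a) ((n:ℝ)+b) d (k+1)| * ε^k ≤ ((k:ℝ)+1) * (C * (((1-σ)⁻¹)^2)^n * ((σ⁻¹)^3)^(k+1)) * ε^k := by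
            gcongr
            exact H n (k+1)
        _ = _ := by ring
    have X : 0 ≤ (C * S0 + 1) * (((1-σ)⁻¹)^2)^n := by positivity
    linarith

lemma G_growth (a b : ℝ) {d x : ℝ} (hd : ∀ m : ℕ, d ≠ -(m : ℝ)) (hx0 : 0 < x) (hx1 : x < 1) {σ : ℝ} (h0 : 0 < σ) (hσ : σ < 1) :
    ∃ D : ℝ, ∃ N : ℕ, ∀ n : ℕ, N ≤ n → |hyp (-(n:ℝ)-a) ((n:ℝ)+b) d x| ≤ D * (((1-σ)⁻¹)^2)^n := by
  set ε := min (x/2) (σ^3/2) with hε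
  have e0 : 0 < ε := by positivity
  have e1 : ε ≤ x/2 := min_le_left _ _
  have s3 : 0 < σ^3 := by positivity
  have e2 : ε < σ^3 := (min_le_right _ _).trans_lt (by linarith)
  have q0 : 0 < 1 - σ := by linarith
  obtain ⟨D, hD, H⟩ := G_small a b hd h0 hσ e0 e2
  have p : 0 < ε * (1-x) := mul_pos e0 (by linarith)
  set K := (3 + 2*|d| + 2*|b-a+1|) / (ε*(1-x)) with hK
  set M := Real.exp (K * (x-ε)) with hM
  have M0 : 0 < M := Real.exp_pos _
  refine ⟨√(2*M) * D, ⌈|a| + |b| + 1⌉₊, fun n hn => ?_⟩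
  have hn' : |a| + |b| + 1 ≤ n := Nat.ceil_le.mp hn
  have l1 : 1 ≤ (n:ℝ) + a := by linarith [neg_abs_le a, abs_nonneg b]
  have l2 : 1 ≤ (n:ℝ) + b := by linarith [neg_abs_le b, abs_nonneg a]
  have l3 : 1 ≤ -((-(n:ℝ)-a) * ((n:ℝ)+b)) := by nlinarith
  have En := energy (-(n:ℝ)-a) ((n:ℝ)+b) hd (K := K) e0 (by linarith) hx1 (by linarith) (by
    rw [show -(n:ℝ)-a + ((n:ℝ)+b) + 1 = b - a + 1 by ring, hK, div_mul_cancel₀ _ p.ne'])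
  rw [← hM] at En
  set lam := -((-(n:ℝ)-a) * ((n:ℝ)+b))
  obtain ⟨b1, b2⟩ := H n
  set R := (((1-σ)⁻¹)^2)^n
  have R0 : 0 < R := by positivity
  have c1 := sq_le_sq' (by linarith [(abs_le.mp b1).1]) (abs_le.mp b1).2
  have c2 := sq_le_sq' (by linarith [(abs_le.mp b2).1]) (abs_le.mp b2).2
  have key : hyp (-(n:ℝ)-a) ((n:ℝ)+b) d x ^2 ≤ 2 * M * (D*R)^2 := by
    have : lam * hyp (-(n:ℝ)-a) ((n:ℝ)+b) d x ^2 ≤ lam * (2 * M * (D*R)^2) := by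
      refine En.trans ?_
      calc _ ≤ (lam * (D*R)^2 + lam * (D*R)^2) * M := by
            gcongr
            refine c2.trans ?_
            exact le_mul_of_one_le_left (by positivity) l3
        _ = _ := by ring
    exact le_of_mul_le_mul_left this (by linarith)
  have := Real.abs_le_sqrt key
  rw [Real.sqrt_mul (by positivity), Real.sqrt_sq (by positivity)] at this
  linarith

lemma SubExp.of_ev {c : ℕ → ℝ} (h : ∀ σ : ℝ, 0 < σ → σ < 1 → ∃ C : ℝ, ∃ N : ℕ, ∀ k, N ≤ k → |c k| * σ^k ≤ C) : SubExp c := by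
  intro σ h0 h1
  obtain ⟨C, N, H⟩ := h σ h0 h1
  refine ⟨|C| + ∑ i ∈ Finset.range N, |c i| * σ^i, fun k => ?_⟩
  by_cases hk : N ≤ k
  · have := H k hk
    have p : 0 ≤ ∑ i ∈ Finset.range N, |c i| * σ^i := Finset.sum_nonneg (fun i _ => by positivity)
    linarith [le_abs_self C]
  · have := Finset.single_le_sum (f := fun i => |c i| * σ^i) (fun i _ => by positivity) (Finset.mem_range.mpr (not_le.mp hk))
    linarith [abs_nonneg C]

lemma subExp_G (a b : ℝ) {d x : ℝ} (hd : ∀ m : ℕ, d ≠ -(m : ℝ)) (hx0 : 0 < x) (hx1 : x < 1) :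
    SubExp (fun n => hyp (-(n:ℝ)-a) ((n:ℝ)+b) d x) := by
  apply SubExp.of_ev
  intro ρ r0 r1
  have s0 : 0 < √ρ := Real.sqrt_pos.mpr r0
  have s1 : √ρ < 1 := by rw [Real.sqrt_lt' one_pos]; simpa using r1
  have s2 : √ρ * √ρ = ρ := Real.mul_self_sqrt r0.le
  obtain ⟨D, N, H⟩ := G_growth a b hd hx0 hx1 (σ := (1-√ρ)/2) (by linarith) (by linarith)
  refine ⟨|D|, N, fun k hk => ?_⟩
  have := H k hk
  have q : √ρ < 1 - (1-√ρ)/2 := by linarith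
  set τ := 1 - (1-√ρ)/2
  have t0 : 0 < τ := s0.trans q
  have u : (τ⁻¹)^2 * ρ ≤ 1 := by
    rw [inv_pow, inv_mul_le_iff₀ (by positivity)]; nlinarith
  calc _ ≤ D * ((τ⁻¹)^2)^k * ρ^k := by gcongr
    _ = D * ((τ⁻¹)^2 * ρ)^k := by rw [mul_pow _ ρ]; ring
    _ ≤ |D| * ((τ⁻¹)^2 * ρ)^k := by gcongr; exact le_abs_self D
    _ ≤ |D| * 1 := by gcongr; exact pow_le_one₀ (by positivity) u
    _ = |D| := mul_one _

lemma subExp_LHS (a b : ℝ) {d x : ℝ} (hd : ∀ m : ℕ, d ≠ -(m : ℝ)) (hab : ∀ m : ℕ, a + b + 1 ≠ -(m : ℝ)) (hx0 : 0 < x) (hx1 : x < 1) :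
    SubExp (fun n => poch (d + a) n * poch b n / poch (a + b + 1) n * hyp (-(n:ℝ)-a) ((n:ℝ)+b) d x / n.factorial) := by
  have h := (subExp_hyp (d+a) b hab).mul (subExp_G a b hd hx0 hx1)
  have e : (fun n : ℕ => poch (d + a) n * poch b n / poch (a + b + 1) n * hyp (-(n:ℝ)-a) ((n:ℝ)+b) d x / n.factorial) = fun n : ℕ => poch (d+a) n * poch b n / (poch (a+b+1) n * n.factorial) * hyp (-(n:ℝ)-a) ((n:ℝ)+b) d x := by
    ext n
    simp only [div_eq_mul_inv, mul_inv]; ring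
  rw [e]; exact h

lemma s_facts {x u s : ℝ} (hx0 : 0 < x) (hx1 : x < 1) (hu : |u| < 1) (hs : s = √((1-u)^2 + 4*x*u)) :
    0 < (1-u)^2 + 4*x*u ∧ 0 < s ∧ s^2 = (1-u)^2 + 4*x*u ∧ 0 < 1+s+u ∧ 0 < 1+s-u ∧ 0 < 2*x/(1+s-u) ∧ 2*x/(1+s-u) < 1
      ∧ 2*u/(1+s+u) < 1 := by
  obtain ⟨u1, u2⟩ := abs_lt.mp hu
  have p : 0 < (1-u)^2 + 4*x*u := by
    have : (1-u)^2 + 4*x*u = (1-x)*(1-u)^2 + x*(1+u)^2 := by ring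
    rw [this]
    have : 0 < (1-x)*(1-u)^2 := mul_pos (by linarith) (pow_pos (by linarith) 2)
    positivity
  have s0 : 0 < s := by rw [hs]; exact Real.sqrt_pos.mpr p
  have s2 : s^2 = (1-u)^2 + 4*x*u := by rw [hs]; exact Real.sq_sqrt p.le
  have q1 : 0 < 1+s+u := by linarith
  have q2 : 0 < 1+s-u := by linarith
  refine ⟨p, s0, s2, q1, q2, by positivity, ?_, ?_⟩
  · rw [div_lt_one q2]
    have : 2*x-1+u < s := by
      apply lt_of_pow_lt_pow_left₀ 2 s0.le
      nlinarith [mul_pos hx0 (sub_pos.mpr hx1)]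
    linarith
  · rw [div_lt_one q1]; linarith

/-- the right side, as a function of u -/
def RH (a b d x u : ℝ) : ℝ :=
  (2/(1+√((1-u)^2 + 4*x*u)+u))^b * hyp (-a) b d (2*x/(1+√((1-u)^2 + 4*x*u)-u))
    * hypExt (a+d) b (a+b+1) (2*u/(1+√((1-u)^2 + 4*x*u)+u))

lemma s_analytic {x u : ℝ} (hx0 : 0 < x) (hx1 : x < 1) (hu : |u| < 1) : AnalyticAt ℝ (fun u => √((1-u)^2 + 4*x*u)) u := by
  have := rpow_analytic (f := fun u => (1-u)^2 + 4*x*u) (x := u) (by fun_prop) (s_facts hx0 hx1 hu rfl).1 (1/2)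
  simpa only [← Real.sqrt_eq_rpow] using this

lemma RH_analytic (a b : ℝ) {d x : ℝ} (hd : ∀ m : ℕ, d ≠ -(m : ℝ)) (hab : ∀ m : ℕ, a + b + 1 ≠ -(m : ℝ)) (hx0 : 0 < x) (hx1 : x < 1) :
    AnalyticOnNhd ℝ (RH a b d x) (Set.Ioo (-1) 1) := by
  intro u hu
  have hu : |u| < 1 := abs_lt.mpr hu
  have hs := s_analytic hx0 hx1 hu
  obtain ⟨p, s0, s2, q1, q2, z0, z1, y1⟩ := s_facts hx0 hx1 hu rfl
  have hP : AnalyticAt ℝ (fun u => 1+√((1-u)^2 + 4*x*u)+u) u := (analyticAt_const.add hs).add analyticAt_id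
  have hM : AnalyticAt ℝ (fun u => 1+√((1-u)^2 + 4*x*u)-u) u := (analyticAt_const.add hs).sub analyticAt_id
  have hA : AnalyticAt ℝ (fun u => 2/(1+√((1-u)^2 + 4*x*u)+u)) u := analyticAt_const.div hP q1.ne'
  have hB : AnalyticAt ℝ (fun u => 2*x/(1+√((1-u)^2 + 4*x*u)-u)) u := analyticAt_const.div hM q2.ne'
  have hC : AnalyticAt ℝ (fun u => 2*u/(1+√((1-u)^2 + 4*x*u)+u)) u := (analyticAt_const.mul analyticAt_id).div hP q1.ne'
  have k1 := rpow_analytic hA (by positivity) b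
  have k2 := AnalyticAt.fun_comp (f := fun u => 2*x/(1+√((1-u)^2 + 4*x*u)-u)) (hyp_analytic (-a) b hd _ ⟨by linarith, z1⟩) hB
  have k3 := AnalyticAt.fun_comp (f := fun u => 2*u/(1+√((1-u)^2 + 4*x*u)+u)) (hypExt_analytic (a+d) b (a+b+1) _ hab y1) hC
  exact (k1.mul k2).mul k3

lemma near_zero (a b : ℝ) {d x : ℝ} (hd : ∀ m : ℕ, d ≠ -(m : ℝ)) (hab : ∀ m : ℕ, a + b + 1 ≠ -(m : ℝ)) (hx0 : 0 < x) (hx1 : x < 1) :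
    ∀ᶠ u in 𝓝 (0:ℝ), ∑' n : ℕ, (poch (d + a) n * poch b n / poch (a + b + 1) n * hyp (-(n:ℝ)-a) ((n:ℝ)+b) d x / n.factorial) * u^n = RH a b d x u := by
  obtain ⟨δ, δ0, δ1, H⟩ := local_id a b d hd hab (z0 := (1+x)/2) (by linarith) (by linarith)
  have hs := (s_analytic (u := 0) hx0 hx1 (by simp)).continuousAt
  have e : √((1-(0:ℝ))^2 + 4*x*0) = 1 := by norm_num
  have hP : ContinuousAt (fun u => 2*u/(1+√((1-u)^2 + 4*x*u)+u)) 0 := by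
    apply ContinuousAt.div (by fun_prop) ((continuousAt_const.add hs).add continuousAt_id)
    show (1+√((1-(0:ℝ))^2 + 4*x*0)+0 : ℝ) ≠ 0
    rw [e]; norm_num
  have hM : ContinuousAt (fun u => 2*x/(1+√((1-u)^2 + 4*x*u)-u)) 0 := by
    apply ContinuousAt.div (by fun_prop) ((continuousAt_const.add hs).sub continuousAt_id)
    show (1+√((1-(0:ℝ))^2 + 4*x*0)-0 : ℝ) ≠ 0
    rw [e]; norm_num
  have v1 : ∀ᶠ u in 𝓝 (0:ℝ), |2*u/(1+√((1-u)^2 + 4*x*u)+u)| < min δ (1/16) := by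
    apply hP.abs.eventually (gt_mem_nhds _)
    simp only [e]; simp; exact δ0
  have v2 : ∀ᶠ u in 𝓝 (0:ℝ), 2*x/(1+√((1-u)^2 + 4*x*u)-u) < (1+x)/2 := by
    apply hM.eventually (gt_mem_nhds _)
    simp only [e]; linarith
  have v3 : ∀ᶠ u in 𝓝 (0:ℝ), |u| < 1 := by
    have := Metric.ball_mem_nhds (0:ℝ) one_pos
    filter_upwards [this] with u hu
    simpa using hu
  filter_upwards [v1, v2, v3] with u w1 w2 hu
  obtain ⟨p, s0, s2, q1, q2, z0, z1, y1⟩ := s_facts hx0 hx1 hu rfl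
  have K := H _ _ (w1.trans_le (min_le_left _ _)) (by rw [abs_of_pos z0]; exact w2.le)
  unfold RH
  rw [hypExt_eq _ _ _ _ hab (w1.trans_le (min_le_right _ _))]
  set s := √((1-u)^2 + 4*x*u) with hs
  have i1 : 1 - 2*u/(1+s+u) * (2*x/(1+s-u)) = 2/(1+s+u) := by
    field_simp
    linear_combination s2
  have i2 : 2*x/(1+s-u) * (1 - 2*u/(1+s+u)) / (2/(1+s+u)) = x := by
    field_simp
    ring
  have i3 : 2*u/(1+s+u) / (2/(1+s+u)) = u := by
    field_simp
  rw [i1, i2, i3] at K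
  rw [← K]
  apply tsum_congr
  intro n
  ring

lemma main_u (a b : ℝ) {d x : ℝ} (hd : ∀ m : ℕ, d ≠ -(m : ℝ)) (hab : ∀ m : ℕ, a + b + 1 ≠ -(m : ℝ)) (hx0 : 0 < x) (hx1 : x < 1)
    {u : ℝ} (hu : |u| < 1) :
    ∑' n : ℕ, (poch (d + a) n * poch b n / poch (a + b + 1) n * hyp (-(n:ℝ)-a) ((n:ℝ)+b) d x / n.factorial) * u^n = RH a b d x u :=
  (subExp_LHS a b hd hab hx0 hx1).analytic.eqOn_of_preconnected_of_eventuallyEq (RH_analytic a b hd hab hx0 hx1)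
    isPreconnected_Ioo (z₀ := 0) ⟨by norm_num, by norm_num⟩ (near_zero a b hd hab hx0 hx1) (abs_lt.mp hu)

theorem flensted_jensen_koornwinder (a b d x t : ℝ)
    (hd : ∀ m : ℕ, d ≠ -(m : ℝ)) (hab : ∀ m : ℕ, a + b + 1 ≠ -(m : ℝ))
    (hx0 : 0 < x) (hx1 : x < 1) (ht0 : 0 < |t|) (ht1 : |t| < 1) :
    (∑' n : ℕ, poch (d + a) n * poch b n / poch (a + b + 1) n
        * hyp (-(n:ℝ) - a) ((n:ℝ) + b) d x * (-t)^n / (Nat.factorial n : ℝ))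
    = ((1 + Real.sqrt ((1 + t)^2 - 4*x*t) - t) / (1 + Real.sqrt ((1 + t)^2 - 4*x*t) + t))
          ^ (a + d)
      * (2 / (1 + Real.sqrt ((1 + t)^2 - 4*x*t) - t)) ^ b
      * hypExt (-a) b d ((t + (1 - Real.sqrt ((1 + t)^2 - 4*x*t))) / (2*t))
      * hypExt (a + d) (a + 1) (a + b + 1)
          (2*t / (t + (1 + Real.sqrt ((1 + t)^2 - 4*x*t)))) := by
  have hu : |-t| < 1 := by rwa [abs_neg]
  have M := main_u a b hd hab hx0 hx1 hu
  have eL : (∑' n : ℕ, poch (d + a) n * poch b n / poch (a + b + 1) n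
        * hyp (-(n:ℝ) - a) ((n:ℝ) + b) d x * (-t)^n / (Nat.factorial n : ℝ)) = ∑' n : ℕ, (poch (d + a) n * poch b n / poch (a + b + 1) n * hyp (-(n:ℝ)-a) ((n:ℝ)+b) d x / n.factorial) * (-t)^n := by
    apply tsum_congr
    intro n
    ring
  rw [eL, M]
  have es : (1 + t)^2 - 4*x*t = (1 - -t)^2 + 4*x*(-t) := by ring
  unfold RH
  rw [es]
  obtain ⟨p, s0, s2, q1, q2, z0, z1, y1⟩ := s_facts hx0 hx1 hu rfl
  set s := √((1 - -t)^2 + 4*x*(-t)) with hs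
  have tne : t ≠ 0 := abs_pos.mp ht0
  rw [sub_neg_eq_add] at q2 z0 z1 ⊢
  rw [← sub_eq_add_neg] at q1 y1 ⊢
  have eZ : (t + (1 - s)) / (2*t) = 2*x/(1+s+t) := by
    field_simp
    linear_combination -s2
  rw [eZ]
  have eH : hypExt (-a) b d (2*x/(1+s+t)) = hyp (-a) b d (2*x/(1+s+t)) := by
    rw [hypExt, if_neg (not_lt.mpr z0.le)]
  rw [eH, show t + (1+s) = 1+s+t by ring]
  have key : hypExt (a+d) b (a+b+1) (2 * -t/(1+s-t)) = ((1+s-t)/(1+s+t))^(a+d) * hypExt (a+d) (a+1) (a+b+1) (2*t/(1+s+t)) := by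
    rcases lt_or_gt_of_ne tne with h | h
    · have c1 : 2*t/(1+s+t) < 0 := div_neg_of_neg_of_pos (by linarith) q2
      have c2 : ¬ (2 * -t/(1+s-t) < 0) := not_lt.mpr (div_nonneg (by linarith) q1.le)
      rw [hypExt, if_neg c2, hypExt, if_pos c1]
      have e1 : 1 - 2*t/(1+s+t) = (1+s-t)/(1+s+t) := by field_simp; ring
      have e2 : 2*t/(1+s+t) / (2*t/(1+s+t) - 1) = 2 * -t/(1+s-t) := by
        have : 2*t/(1+s+t) - 1 = -((1+s-t)/(1+s+t)) := by rw [← e1]; ring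
        rw [this]; field_simp
      rw [e1, e2, ← mul_assoc, ← Real.rpow_add (div_pos q1 q2), add_neg_cancel, Real.rpow_zero, one_mul]
      congr 1; ring
    · have c1 : ¬ (2*t/(1+s+t) < 0) := not_lt.mpr (div_nonneg (by linarith) q2.le)
      have c2 : 2 * -t/(1+s-t) < 0 := div_neg_of_neg_of_pos (by linarith) q1
      rw [hypExt, if_pos c2, hypExt, if_neg c1]
      have e1 : 1 - 2 * -t/(1+s-t) = ((1+s-t)/(1+s+t))⁻¹ := by field_simp; ring
      have e2 : 2 * -t/(1+s-t) / (2 * -t/(1+s-t) - 1) = 2*t/(1+s+t) := by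
        have : 2 * -t/(1+s-t) - 1 = -((1+s-t)/(1+s+t))⁻¹ := by rw [← e1]; ring
        rw [this, inv_div]; field_simp
      rw [e1, e2, Real.rpow_neg (by positivity), Real.inv_rpow (by positivity), inv_inv, show a + b + 1 - b = a + 1 by ring]
  rw [key]
  ring
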